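/- arXiv:1602.01337 — 7 statements merged into one kernel-verified Lean document; each statement's English description precedes it below -/
import Mathlib

section
/- For every odd integer n ≥ 3, the cycle C_n admits a super edge-magic labeling. Explicitly, the bijection f : V(C_n) → {1,…,n} defined on the vertices v_1,…,v_n of the cycle (with edges v_i v_{i+1} for 1 ≤ i ≤ n−1 and v_n v_1) by f(v_i) = (i+1)/2 if i is odd and f(v_i) = (i+1+n)/2 if i is even makes the set {f(u)+f(v) : uv ∈ E(C_n)} a set of n consecutive integers, and hence extends to a super edge-magic labeling of C_n. -/
/-- An edge-magic labeling of a finite graph presented by an endpoint map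
`ends : E → V × V` (loops and multiple edges allowed): the vertex labels `fv`
and edge labels `fe` together form a bijection onto `{1, …, |V| + |E|}` and
every edge `e` satisfies `fv (ends e).1 + fe e + fv (ends e).2 = k`.
The constant `k` is the valence. -/
def IsEdgeMagic {V E : Type} [Fintype V] [Fintype E] (ends : E → V × V)
    (fv : V → ℕ) (fe : E → ℕ) (k : ℕ) : Prop :=
  Function.Injective (Sum.elim fv fe) ∧
  Set.range (Sum.elim fv fe) = Set.Icc 1 (Fintype.card V + Fintype.card E) ∧
  ∀ e : E, fv (ends e).1 + fe e + fv (ends e).2 = k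

/-- A super edge-magic labeling: edge-magic, and moreover the vertex labels
are exactly `{1, …, |V|}`. -/
def IsSuperEdgeMagic {V E : Type} [Fintype V] [Fintype E] (ends : E → V × V)
    (fv : V → ℕ) (fe : E → ℕ) (k : ℕ) : Prop :=
  IsEdgeMagic ends fv fe k ∧ Set.range fv = Set.Icc 1 (Fintype.card V)

/-- The cycle `C_m`: vertices `Fin m`, edge `i` joins `i` to `i+1 (mod m)`. -/
def cycleEnds (m : ℕ) : Fin m → Fin m × Fin m :=
  fun i => (i, ⟨(i.val + 1) % m, Nat.mod_lt _ i.pos⟩)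

/-- The crown `C_m ⊙ K̄_n`: vertices are `Sum.inl i` (cycle vertices `v_i`) and
`Sum.inr (i, j)` (pendant vertices `v_i^j`); edges are the `m` cycle edges and
the `m * n` pendant edges. -/
def crownEnds (m n : ℕ) :
    (Fin m ⊕ Fin m × Fin n) → (Fin m ⊕ Fin m × Fin n) × (Fin m ⊕ Fin m × Fin n)
  | Sum.inl i => (Sum.inl i, Sum.inl ⟨(i.val + 1) % m, Nat.mod_lt _ i.pos⟩)
  | Sum.inr p => (Sum.inl p.1, Sum.inr p)

/-- The graph `K_{1,n}^l`: the star `K_{1,n}` (center `none`, leaves `some j`)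
with a loop (edge `none`) attached at the center. -/
def starLoopEnds (n : ℕ) : Option (Fin n) → Option (Fin n) × Option (Fin n)
  | none => (none, none)
  | some j => (none, some j)

/-!
Vertex labels filling `{1, …, p}` extend to a super edge-magic labeling as soon as the edge sums
are `q` consecutive integers: give each edge the complement of its sum to a suitable constant.

On `C_n` with `n` odd, number the vertices `0, …, n - 1`. Up to a shift, the labeling is then
division by the unit `2` in `ℤ/nℤ`, hence a bijection: as an integer, twice the shifted label is
`i` for even `i` and `i + n` for odd `i`. Exactly one of `i` and `i + 1` is odd, so the edge sums
along the path from `0` to `n - 1` increase by one at each step, while both ends of the closing edge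
are even and its sum falls just below all the others.
-/

namespace IsSuperEdgeMagic

open Set

variable {V E : Type} [Fintype V] [Fintype E] {ends : E → V × V} {fv : V → ℕ} {a : ℕ}

theorem of_range_eq {fe : E → ℕ} {k : ℕ} (hfv : range fv = Icc 1 (Fintype.card V))
    (hfe : range fe = Ioc (Fintype.card V) (Fintype.card V + Fintype.card E))
    (hk : ∀ e, fv (ends e).1 + fe e + fv (ends e).2 = k) :
    IsSuperEdgeMagic ends fv fe k := by
  have hrange : range (Sum.elim fv fe) = Icc 1 (Fintype.card V + Fintype.card E) := by
    rw [Sum.elim_range, hfv, hfe]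
    ext x
    simp only [mem_union, mem_Icc, mem_Ioc]
    lia
  have hinj : Function.Injective (Sum.elim fv fe) := by
    rw [← injOn_univ]
    refine injOn_of_ncard_image_eq ?_
    simp [image_univ, hrange, ncard_univ]
  exact ⟨⟨hinj, hrange, hk⟩, hfv⟩

theorem of_range_add_eq_Ico (hfv : range fv = Icc 1 (Fintype.card V))
    (hsum : range (fun e ↦ fv (ends e).1 + fv (ends e).2) = Ico a (a + Fintype.card E)) :
    IsSuperEdgeMagic ends fv
      (fun e ↦ Fintype.card V + Fintype.card E + a - (fv (ends e).1 + fv (ends e).2))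
      (Fintype.card V + Fintype.card E + a) := by
  refine of_range_eq hfv ?_ fun e ↦ ?_
  · rw [range_comp' (fun s ↦ Fintype.card V + Fintype.card E + a - s), hsum, ← Finset.coe_Ico,
      ← Finset.coe_image, Nat.Ico_image_const_sub_eq_Ico (by lia)]
    ext x
    simp only [Finset.coe_Ico, mem_Ico, mem_Ioc]
    lia
  · have hmem : fv (ends e).1 + fv (ends e).2 ∈ Ico a (a + Fintype.card E) :=
      hsum ▸ mem_range_self e
    have := hmem.2
    lia

end IsSuperEdgeMagic

theorem cycleEnds_snd_eq_finRotate {n : ℕ} (i : Fin n) : (cycleEnds n i).2 = finRotate n i := by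
  have := i.neZero
  ext
  simp [cycleEnds, Fin.val_add]

/-- The vertex labeling `f` of `C_n`, with the vertex `v_{i + 1}` of the paper encoded as `i : ℕ`;
only `i < n` and odd `n` correspond to labels of the paper. -/
def oddCycleLabel (n i : ℕ) : ℕ :=
  if (i + 1) % 2 = 1 then (i + 2) / 2 else (i + 2 + n) / 2

section oddCycleLabel

open Set

variable {n i : ℕ}

theorem two_mul_oddCycleLabel_of_even (hi : Even i) : 2 * oddCycleLabel n i = i + 2 := by
  rw [oddCycleLabel, if_pos (Nat.odd_iff.mp hi.add_one),
    Nat.two_mul_div_two_of_even (hi.add even_two)]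

theorem two_mul_oddCycleLabel_of_odd (hn : Odd n) (hi : Odd i) :
    2 * oddCycleLabel n i = i + 2 + n := by
  have hsucc : (i + 1) % 2 ≠ 1 := Nat.not_odd_iff_even.mpr hi.add_one ∘ Nat.odd_iff.mpr
  rw [oddCycleLabel, if_neg hsucc,
    Nat.two_mul_div_two_of_even ((hi.add_even even_two).add_odd hn)]

theorem two_mul_oddCycleLabel_modEq (hn : Odd n) (i : ℕ) :
    2 * oddCycleLabel n i ≡ i + 2 [MOD n] := by
  rcases i.even_or_odd with hi | hi
  · rw [two_mul_oddCycleLabel_of_even hi]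
  · rw [two_mul_oddCycleLabel_of_odd hn hi]
    exact Nat.add_modEq_right

theorem oddCycleLabel_mem_Icc (hn : Odd n) (hi : i < n) : oddCycleLabel n i ∈ Icc 1 n := by
  rw [mem_Icc]
  rcases i.even_or_odd with heven | hodd
  · have := two_mul_oddCycleLabel_of_even (n := n) heven
    lia
  · have := two_mul_oddCycleLabel_of_odd hn hodd
    lia

theorem injOn_oddCycleLabel (hn : Odd n) : InjOn (oddCycleLabel n) (Iio n) := by
  intro i hi j hj hij
  have hmod : i + 2 ≡ j + 2 [MOD n] :=
    calc
      i + 2 ≡ 2 * oddCycleLabel n i [MOD n] := (two_mul_oddCycleLabel_modEq hn i).symm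
      _ = 2 * oddCycleLabel n j := by rw [hij]
      _ ≡ j + 2 [MOD n] := two_mul_oddCycleLabel_modEq hn j
  exact (hmod.add_right_cancel' 2).eq_of_lt_of_lt hi hj

theorem range_oddCycleLabel (hn : Odd n) :
    range (fun i : Fin n ↦ oddCycleLabel n i) = Icc 1 n := by
  refine eq_of_subset_of_ncard_le ?_ ?_
  · rintro _ ⟨i, rfl⟩
    exact oddCycleLabel_mem_Icc hn i.isLt
  · rw [ncard_range_of_injective fun i j hij ↦ Fin.ext (injOn_oddCycleLabel hn i.isLt j.isLt hij)]
    simp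

theorem oddCycleLabel_add_oddCycleLabel_succ (hn : Odd n) (i : ℕ) :
    oddCycleLabel n i + oddCycleLabel n (i + 1) = (n + 3) / 2 + (i + 1) := by
  have hdouble : 2 * (oddCycleLabel n i + oddCycleLabel n (i + 1)) = n + 3 + 2 * (i + 1) := by
    rcases i.even_or_odd with hi | hi
    · rw [mul_add, two_mul_oddCycleLabel_of_even hi, two_mul_oddCycleLabel_of_odd hn hi.add_one]
      ring
    · rw [mul_add, two_mul_oddCycleLabel_of_odd hn hi, two_mul_oddCycleLabel_of_even hi.add_one]
      ring
  lia

theorem oddCycleLabel_add_oddCycleLabel_finRotate (hn : Odd n) (i : Fin n) :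
    oddCycleLabel n i + oddCycleLabel n (finRotate n i) = (n + 3) / 2 + finRotate n i := by
  obtain ⟨m, rfl⟩ := hn
  rcases eq_or_ne i (Fin.last _) with rfl | hi
  · have hlast := two_mul_oddCycleLabel_of_even (n := 2 * m + 1) (even_two_mul m)
    have hzero := two_mul_oddCycleLabel_of_even (n := 2 * m + 1) Even.zero
    rw [finRotate_last, Fin.val_last, Fin.val_zero]
    lia
  · rw [coe_finRotate_of_ne_last hi]
    exact oddCycleLabel_add_oddCycleLabel_succ ⟨m, rfl⟩ i

theorem range_oddCycleLabel_add_oddCycleLabel_finRotate (hn : Odd n) :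
    range (fun i : Fin n ↦ oddCycleLabel n i + oddCycleLabel n (finRotate n i)) =
      Ico ((n + 3) / 2) ((n + 3) / 2 + n) := by
  calc
    _ = range ((fun j : Fin n ↦ (n + 3) / 2 + (j : ℕ)) ∘ finRotate n) :=
      congrArg range (funext (oddCycleLabel_add_oddCycleLabel_finRotate hn))
    _ = (fun j ↦ (n + 3) / 2 + j) '' Ico 0 n := by
      rw [(finRotate n).surjective.range_comp, range_comp', Fin.range_val, ← Ico_bot,
        bot_eq_zero]
    _ = _ := by simp [add_comm]

end oddCycleLabel

/-- for odd n ≥ 3 the explicit labeling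
f(v_i) = (i+1)/2 for odd i, (i+1+n)/2 for even i (here i = idx.val + 1, 1-based)
induces n consecutive edge sums on C_n, and extends to a super edge-magic
labeling of C_n. -/
theorem cycle_odd_superEdgeMagic (n : ℕ) (hn : 3 ≤ n) (hodd : Odd n)
    (f : Fin n → ℕ)
    (hf : ∀ i : Fin n,
      f i = if (i.val + 1) % 2 = 1 then (i.val + 2) / 2 else (i.val + 2 + n) / 2) :
    (∃ a : ℕ, Set.range (fun e : Fin n => f (cycleEnds n e).1 + f (cycleEnds n e).2)
        = Set.Ico a (a + n)) ∧
    ∃ fe k, IsSuperEdgeMagic (cycleEnds n) f fe k := by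
  obtain rfl : f = fun i : Fin n ↦ oddCycleLabel n i := funext hf
  have hsum : Set.range (fun e ↦ oddCycleLabel n (cycleEnds n e).1 +
      oddCycleLabel n (cycleEnds n e).2) = Set.Ico ((n + 3) / 2) ((n + 3) / 2 + n) := by
    simp only [cycleEnds_snd_eq_finRotate]
    exact range_oddCycleLabel_add_oddCycleLabel_finRotate hodd
  refine ⟨⟨_, hsum⟩, _, _,
    IsSuperEdgeMagic.of_range_add_eq_Ico (a := (n + 3) / 2) ?_ (by rwa [Fintype.card_fin])⟩
  rw [Fintype.card_fin, range_oddCycleLabel hodd]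
end

section
/- Let G be a (p,q)-graph. Then G is super edge-magic if and only if there is a bijection g : V(G) → {1,…,p} such that the set S = {g(u)+g(v) : uv ∈ E(G)} consists of q consecutive integers. Moreover, in this case g can be extended to a super edge-magic labeling f of G with valence p + q + min S. -/
/-! In a super edge-magic labeling with valence `k` the edges carry the labels `p + 1, …, p + q`,
and the label of an edge is `k` minus the sum of the labels of its ends. Hence `x ↦ k - x` exchanges
the set of edge labels with the set of induced sums, so one is an interval of `q` integers exactly
when the other is. Distinctness of the labels comes for free: `p + q` elements are labeled with
`p + q` values. -/

/-- The sum `g(u) + g(v)` that a vertex labeling `g` induces on an edge `e = uv`; the set `S` of the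
theorem is the range of `edgeSum ends g`. -/
def edgeSum {V E : Type*} (ends : E → V × V) (g : V → ℕ) (e : E) : ℕ :=
  g (ends e).1 + g (ends e).2

theorem injective_of_ncard_range_eq_card {α β : Type*} [Finite α] {f : α → β}
    (h : (Set.range f).ncard = Nat.card α) : Function.Injective f :=
  Set.injOn_univ.1 <| Set.injOn_of_ncard_image_eq <| by rwa [Set.image_univ, Set.ncard_univ]

-- The reflection `a + b + n - 1 - x` maps `{a, …, a + n - 1}` onto `{b, …, b + n - 1}`; adding `1`
-- on the left avoids the truncated subtraction.
theorem range_eq_Ico_of_add_eq {ι : Type*} {s t : ι → ℕ} {a b n : ℕ}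
    (h : ∀ i, s i + t i + 1 = a + b + n) (hs : Set.range s = Set.Ico a (a + n)) :
    Set.range t = Set.Ico b (b + n) := by
  ext y
  constructor
  · rintro ⟨i, rfl⟩
    have hsi : s i ∈ Set.Ico a (a + n) := hs ▸ Set.mem_range_self i
    grind
  · intro hy
    obtain ⟨i, hi⟩ : a + b + n - 1 - y ∈ Set.range s := by grind
    exact ⟨i, by grind⟩

theorem Icc_one_union_Ico_succ (p q : ℕ) :
    Set.Icc 1 p ∪ Set.Ico (p + 1) (p + 1 + q) = Set.Icc 1 (p + q) := by
  grind

theorem disjoint_Icc_Ico_succ (m p n : ℕ) : Disjoint (Set.Icc m p) (Set.Ico (p + 1) n) :=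
  Set.disjoint_left.2 fun _ hx hx' => by grind

section SuperEdgeMagic

variable {V E : Type} [Fintype V] [Fintype E] {ends : E → V × V} {g : V → ℕ} {fe : E → ℕ}
  {k a : ℕ}

theorem isSuperEdgeMagic_iff_range_edge_labels :
    IsSuperEdgeMagic ends g fe k ↔
      Set.range g = Set.Icc 1 (Fintype.card V) ∧
      Set.range fe = Set.Ico (Fintype.card V + 1) (Fintype.card V + 1 + Fintype.card E) ∧
      ∀ e, edgeSum ends g e + fe e = k := by
  constructor
  · rintro ⟨⟨hinj, hrange, hk⟩, hg⟩
    have hdisj : Disjoint (Set.range fe) (Set.range g) :=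
      Set.disjoint_range_iff.2 fun e v h => Sum.inr_ne_inl (hinj h)
    rw [Set.Sum.elim_range, hg, ← Icc_one_union_Ico_succ] at hrange
    rw [hg] at hdisj
    have hfe : Set.range fe =
        Set.Ico (Fintype.card V + 1) (Fintype.card V + 1 + Fintype.card E) := by
      refine eq_of_inf_eq_sup_eq (a := Set.Icc 1 (Fintype.card V)) ?_ ?_
      · rw [hdisj.eq_bot, (disjoint_Icc_Ico_succ _ _ _).symm.eq_bot]
      · rwa [sup_comm, sup_comm (Set.Ico _ _)]
    exact ⟨hg, hfe, fun e => (add_right_comm _ _ _).trans (hk e)⟩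
  · rintro ⟨hg, he, hk⟩
    have hrange : Set.range (Sum.elim g fe) = Set.Icc 1 (Fintype.card V + Fintype.card E) := by
      rw [Set.Sum.elim_range, hg, he, Icc_one_union_Ico_succ]
    have hinj : Function.Injective (Sum.elim g fe) :=
      injective_of_ncard_range_eq_card (by simp [hrange, Set.ncard_eq_toFinset_card'])
    exact ⟨⟨hinj, hrange, fun e => (add_right_comm _ _ _).trans (hk e)⟩, hg⟩

theorem isSuperEdgeMagic_iff_range_edgeSum :
    IsSuperEdgeMagic ends g fe (Fintype.card V + Fintype.card E + a) ↔
      Set.range g = Set.Icc 1 (Fintype.card V) ∧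
      Set.range (edgeSum ends g) = Set.Ico a (a + Fintype.card E) ∧
      ∀ e, edgeSum ends g e + fe e = Fintype.card V + Fintype.card E + a := by
  rw [isSuperEdgeMagic_iff_range_edge_labels]
  refine and_congr_right fun _ => and_congr_left fun hk => ?_
  exact ⟨range_eq_Ico_of_add_eq fun e => by grind, range_eq_Ico_of_add_eq fun e => by grind⟩

theorem IsSuperEdgeMagic.card_add_card_le [Nonempty E] (h : IsSuperEdgeMagic ends g fe k) :
    Fintype.card V + Fintype.card E ≤ k := by
  obtain ⟨-, he, hk⟩ := isSuperEdgeMagic_iff_range_edge_labels.1 h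
  obtain ⟨e, hmax⟩ : Fintype.card V + Fintype.card E ∈ Set.range fe := by
    have := Fintype.card_pos (α := E)
    grind
  calc Fintype.card V + Fintype.card E = fe e := hmax.symm
    _ ≤ edgeSum ends g e + fe e := Nat.le_add_left _ _
    _ = k := hk e

theorem IsSuperEdgeMagic.exists_range_edgeSum_eq (h : IsSuperEdgeMagic ends g fe k) :
    ∃ a, Set.range (edgeSum ends g) = Set.Ico a (a + Fintype.card E) := by
  cases isEmpty_or_nonempty E
  · exact ⟨0, by simp [Set.range_eq_empty]⟩
  · obtain ⟨a, rfl⟩ := Nat.exists_eq_add_of_le h.card_add_card_le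
    exact ⟨a, (isSuperEdgeMagic_iff_range_edgeSum.1 h).2.1⟩

theorem exists_isSuperEdgeMagic_of_range_edgeSum (hg : Set.range g = Set.Icc 1 (Fintype.card V))
    (hS : Set.range (edgeSum ends g) = Set.Ico a (a + Fintype.card E)) :
    ∃ fe, IsSuperEdgeMagic ends g fe (Fintype.card V + Fintype.card E + a) := by
  have hle (e : E) : edgeSum ends g e ≤ Fintype.card V + Fintype.card E + a := by
    have he : edgeSum ends g e ∈ Set.Ico a (a + Fintype.card E) := hS ▸ Set.mem_range_self e
    grind
  exact ⟨fun e => Fintype.card V + Fintype.card E + a - edgeSum ends g e,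
    isSuperEdgeMagic_iff_range_edgeSum.2 ⟨hg, hS, fun e => Nat.add_sub_of_le (hle e)⟩⟩

end SuperEdgeMagic

/-- a (p,q)-graph is super edge-magic iff there is a bijection
g : V → {1,…,p} whose induced edge sums form q consecutive integers
({a, …, a+q-1}, so min S = a); moreover any such g extends to a super
edge-magic labeling with valence p + q + min S. -/
theorem superEdgeMagic_iff_consecutive {V E : Type} [Fintype V] [Fintype E]
    (ends : E → V × V) :
    ((∃ fv fe k, IsSuperEdgeMagic ends fv fe k) ↔
      ∃ g : V → ℕ, Set.range g = Set.Icc 1 (Fintype.card V) ∧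
        ∃ a : ℕ, Set.range (fun e : E => g (ends e).1 + g (ends e).2)
          = Set.Ico a (a + Fintype.card E)) ∧
    ∀ (g : V → ℕ) (a : ℕ),
      Set.range g = Set.Icc 1 (Fintype.card V) →
      Set.range (fun e : E => g (ends e).1 + g (ends e).2)
        = Set.Ico a (a + Fintype.card E) →
      ∃ fe, IsSuperEdgeMagic ends g fe (Fintype.card V + Fintype.card E + a) := by
  refine ⟨⟨?_, ?_⟩, fun g a hg hS => exists_isSuperEdgeMagic_of_range_edgeSum hg hS⟩
  · rintro ⟨g, fe, k, h⟩
    exact ⟨g, h.2, h.exists_range_edgeSum_eq⟩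
  · rintro ⟨g, hg, a, hS⟩
    obtain ⟨fe, h⟩ := exists_isSuperEdgeMagic_of_range_edgeSum hg hS
    exact ⟨g, fe, _, h⟩
end

section
/- For every positive integer n, the graph K_{1,n}^l (the star K_{1,n} with a loop attached at its central vertex) is perfect edge-magic: for every integer k with 2n+4 ≤ k ≤ 4n+5 there exists an edge-magic labeling of K_{1,n}^l with valence k. In particular K_{1,n}^l has at least 2n+2 distinct edge-magic valences. -/
/-!
The reflection `x ↦ 2p + 1 - x` splits the labels `{1, …, 2p}` into `p` pairs. In a star with a loop
at its center every edge joins the center to exactly one of the `p` vertices, the loop joining it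
to itself. Give each vertex one label from a pair and its edge the other one: all edge sums then
equal the center's label plus `2p + 1`. Placing `{1, …, p}` on the vertices in any order, and then
possibly swapping the center's label with its partner, gives the center any label in `{1, …, 2p}`.
-/

section Reflection

open Fintype Function Set

theorem range_eq_Icc_one_card {α : Type*} [Fintype α] {g : α → ℕ} (hg : Injective g)
    (hmem : ∀ a, g a ∈ Icc 1 (card α)) : range g = Icc 1 (card α) := by
  refine eq_of_subset_of_ncard_le (range_subset_iff.2 hmem) ?_
  rw [← image_univ, ncard_image_of_injective _ hg]
  simp

variable {V : Type*} [Fintype V] {f : V → ℕ}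

/-- The partner `2p + 1 - f v` of the label `f v`, where `p` is the number of vertices; meaningful
when `f v` lies in `{1, …, 2p}`. -/
def reflectedLabel (f : V → ℕ) (v : V) : ℕ :=
  2 * card V + 1 - f v

/-- A labeling of `p` vertices by elements of `{1, …, 2p}`, one from each of the `p` pairs
`{x, 2p + 1 - x}`. As there are as many vertices as pairs, it suffices to ask that no pair is
met twice. -/
structure IsReflectionTransversal (f : V → ℕ) : Prop where
  injective : Injective f
  mem_Icc : ∀ v, f v ∈ Icc 1 (2 * card V)
  add_ne : ∀ v w, f v + f w ≠ 2 * card V + 1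

theorem isReflectionTransversal_of_mem_Icc_card (hf : Injective f)
    (hmem : ∀ v, f v ∈ Icc 1 (card V)) : IsReflectionTransversal f where
  injective := hf
  mem_Icc v := ⟨(hmem v).1, by have := (hmem v).2; omega⟩
  add_ne v w := by have := (hmem v).2; have := (hmem w).2; omega

namespace IsReflectionTransversal

theorem reflectedLabel_add (hf : IsReflectionTransversal f) (v : V) :
    reflectedLabel f v + f v = 2 * card V + 1 := by
  have := (hf.mem_Icc v).2
  unfold reflectedLabel
  omega

theorem reflectedLabel_mem_Icc (hf : IsReflectionTransversal f) (v : V) :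
    reflectedLabel f v ∈ Icc 1 (2 * card V) := by
  have hsum := hf.reflectedLabel_add v
  obtain ⟨hpos, hle⟩ := hf.mem_Icc v
  exact ⟨by omega, by omega⟩

theorem reflectedLabel_injective (hf : IsReflectionTransversal f) :
    Injective (reflectedLabel f) := by
  intro v w h
  have hv := hf.reflectedLabel_add v
  have hw := hf.reflectedLabel_add w
  exact hf.injective (by omega)

theorem ne_reflectedLabel (hf : IsReflectionTransversal f) (v w : V) :
    f v ≠ reflectedLabel f w := by
  have := hf.reflectedLabel_add w
  have := hf.add_ne v w
  omega

theorem sumElim_injective (hf : IsReflectionTransversal f) :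
    Injective (Sum.elim f (reflectedLabel f)) :=
  hf.injective.sumElim hf.reflectedLabel_injective hf.ne_reflectedLabel

theorem range_sumElim (hf : IsReflectionTransversal f) :
    range (Sum.elim f (reflectedLabel f)) = Icc 1 (card V + card V) := by
  rw [← card_sum]
  refine range_eq_Icc_one_card hf.sumElim_injective ?_
  rw [card_sum, ← two_mul]
  exact Sum.rec hf.mem_Icc hf.reflectedLabel_mem_Icc

theorem update_reflectedLabel [DecidableEq V] (hf : IsReflectionTransversal f) (r : V) :
    IsReflectionTransversal (update f r (reflectedLabel f r)) where
  injective v w h := by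
    rcases eq_or_ne v r with hv | hv <;> rcases eq_or_ne w r with hw | hw
    · rw [hv, hw]
    · rw [hv, update_self, update_of_ne hw] at h
      exact (hf.ne_reflectedLabel w r h.symm).elim
    · rw [hw, update_self, update_of_ne hv] at h
      exact (hf.ne_reflectedLabel v r h).elim
    · rw [update_of_ne hv, update_of_ne hw] at h
      exact hf.injective h
  mem_Icc v := by
    rcases eq_or_ne v r with rfl | hv
    · simpa only [update_self] using hf.reflectedLabel_mem_Icc v
    · simpa only [update_of_ne hv] using hf.mem_Icc v
  add_ne v w h := by
    have hr := hf.reflectedLabel_add r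
    rcases eq_or_ne v r with hv | hv <;> rcases eq_or_ne w r with hw | hw
    · rw [hv, hw, update_self] at h
      omega
    · rw [hv, update_self, update_of_ne hw] at h
      exact hw (hf.injective (by omega))
    · rw [hw, update_self, update_of_ne hv] at h
      exact hv (hf.injective (by omega))
    · rw [update_of_ne hv, update_of_ne hw] at h
      exact hf.add_ne v w h

end IsReflectionTransversal

theorem exists_isReflectionTransversal_of_le_card (r : V) {c : ℕ} (hc : c ∈ Icc 1 (card V)) :
    ∃ f : V → ℕ, f r = c ∧ IsReflectionTransversal f := by
  classical
  obtain ⟨i, rfl⟩ : ∃ i : Fin (card V), (i : ℕ) + 1 = c :=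
    ⟨⟨c - 1, by have := hc.1; have := hc.2; omega⟩, Nat.sub_add_cancel hc.1⟩
  let e : V ≃ Fin (card V) := (equivFin V).setValue r i
  refine ⟨fun v => e v + 1, by simp [e], isReflectionTransversal_of_mem_Icc_card ?_ fun v => ?_⟩
  · exact (add_left_injective 1).comp (Fin.val_injective.comp e.injective)
  · exact ⟨Nat.le_add_left 1 _, (e v).isLt⟩

theorem exists_isReflectionTransversal (r : V) {c : ℕ} (hc : c ∈ Icc 1 (2 * card V)) :
    ∃ f : V → ℕ, f r = c ∧ IsReflectionTransversal f := by
  classical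
  obtain ⟨hc₁, hc₂⟩ := hc
  rcases le_or_gt c (card V) with hle | hlt
  · exact exists_isReflectionTransversal_of_le_card r ⟨hc₁, hle⟩
  · obtain ⟨f, hfr, hf⟩ := exists_isReflectionTransversal_of_le_card r
      (c := 2 * card V + 1 - c) ⟨by omega, by omega⟩
    have := hf.reflectedLabel_add r
    exact ⟨update f r (reflectedLabel f r), by rw [update_self]; omega,
      hf.update_reflectedLabel r⟩

end Reflection

section StarLoop

open Fintype

variable {V : Type} [Fintype V]

theorem IsReflectionTransversal.isEdgeMagic {f : V → ℕ} (hf : IsReflectionTransversal f) (r : V) :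
    IsEdgeMagic (fun v => (r, v)) f (reflectedLabel f) (f r + (2 * card V + 1)) :=
  ⟨hf.sumElim_injective, hf.range_sumElim, fun v => by rw [add_assoc, hf.reflectedLabel_add]⟩

theorem exists_isEdgeMagic_star_with_loop (r : V) {k : ℕ} (hk₁ : 2 * card V + 2 ≤ k)
    (hk₂ : k ≤ 4 * card V + 1) : ∃ fv fe, IsEdgeMagic (fun v => (r, v)) fv fe k := by
  obtain ⟨c, rfl⟩ : ∃ c, k = c + (2 * card V + 1) := ⟨k - (2 * card V + 1), by omega⟩
  obtain ⟨f, rfl, hf⟩ := exists_isReflectionTransversal r (c := c) ⟨by omega, by omega⟩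
  exact ⟨f, reflectedLabel f, hf.isEdgeMagic r⟩

theorem starLoopEnds_eq (n : ℕ) : starLoopEnds n = fun v => (none, v) := by
  funext v
  cases v <;> rfl

end StarLoop

/-- K_{1,n}^l is perfect edge-magic: every integer k with
2n+4 ≤ k ≤ 4n+5 is the valence of some edge-magic labeling of K_{1,n}^l. -/
theorem starLoop_perfectEdgeMagic (n : ℕ) (hn : 1 ≤ n) :
    ∀ k : ℕ, 2 * n + 4 ≤ k → k ≤ 4 * n + 5 →
      ∃ fv fe, IsEdgeMagic (starLoopEnds n) fv fe k := by
  intro k hk₁ hk₂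
  rw [starLoopEnds_eq]
  apply exists_isEdgeMagic_star_with_loop
  all_goals
    rw [Fintype.card_option, Fintype.card_fin]
    omega
end

section
/- Let p and q be distinct odd primes and let k be a positive integer. Then there exist exactly 2p^{k−1} integers y with 1 < y < p^k q such that gcd(y, p^k q) ≠ 1 and gcd(y−1, p^k q) ≠ 1. Moreover, these integers are precisely the numbers of the form x + λpq and x′ + λpq with λ an integer in [0, p^{k−1}−1], where x and x′ = pq − x + 1 are the two integers in (1, pq) satisfying gcd(x, pq) ≠ 1 and gcd(x−1, pq) ≠ 1. -/
/-! By the Chinese remainder theorem, `ZMod (p * q)` is a product of two fields, where the only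
elements `u` with both `u` and `u - 1` non-units are the complementary idempotents `(0, 1)` and
`(1, 0)`. Hence `gcd(y, pq) ≠ 1` and `gcd(y - 1, pq) ≠ 1` hold exactly when `y` lies in one of two
residue classes modulo `pq`, those of `x` and `1 - x`. Being coprime to `p ^ k * q ^ l` depends only
on the residue modulo `pq`, and each class modulo `pq` meets `[0, p ^ k * q ^ l)` in
`p ^ (k - 1) * q ^ (l - 1)` points. -/

theorem natCast_sub_add_one_eq_one_sub {n x : ℕ} (hx : x ≤ n) :
    ((n - x + 1 : ℕ) : ZMod n) = 1 - x := by
  rw [Nat.cast_succ, Nat.cast_sub hx, ZMod.natCast_self]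
  ring

/-- The ring-theoretic form of the gcd condition of the theorem: for `y ≥ 1`, both `y` and `y - 1`
fail to be coprime to `n` exactly when the class of `y` in `ZMod n` is a bad residue. Working with
units of an arbitrary ring lets the condition be transported along the Chinese remainder
isomorphism. -/
def IsBadResidue {R : Type*} [Ring R] (u : R) : Prop :=
  ¬IsUnit u ∧ ¬IsUnit (u - 1)

namespace IsBadResidue

theorem ne_one_sub {R : Type*} [Ring R] {u : R} (hu : IsBadResidue u) : u ≠ 1 - u := by
  intro h
  have hadd : u + u = 1 := eq_sub_iff_add_eq.mp h
  exact hu.1 ⟨⟨u, 2, by rw [mul_two, hadd], by rw [two_mul, hadd]⟩, rfl⟩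

theorem map_iff {R S : Type*} [Ring R] [Ring S] (e : R ≃+* S) {u : R} :
    IsBadResidue (e u) ↔ IsBadResidue u := by
  rw [IsBadResidue, IsBadResidue, ← map_one e, ← map_sub, MulEquiv.isUnit_map,
    MulEquiv.isUnit_map]

theorem prod_iff {K L : Type*} [DivisionRing K] [DivisionRing L] {u : K × L} :
    IsBadResidue u ↔ u = (0, 1) ∨ u = (1, 0) := by
  obtain ⟨a, b⟩ := u
  simp only [IsBadResidue, Prod.isUnit_iff, isUnit_iff_ne_zero, Prod.fst_sub, Prod.snd_sub,
    Prod.fst_one, Prod.snd_one, sub_ne_zero, Prod.mk.injEq]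
  have hK : (0 : K) ≠ 1 := zero_ne_one
  have hL : (0 : L) ≠ 1 := zero_ne_one
  grind

theorem prod_iff_eq_or_eq_one_sub {K L : Type*} [DivisionRing K] [DivisionRing L] {u v : K × L}
    (hu : IsBadResidue u) : IsBadResidue v ↔ v = u ∨ v = 1 - u := by
  rw [prod_iff] at hu ⊢
  rcases hu with rfl | rfl <;> simp [Prod.ext_iff, or_comm]

theorem zmod_iff_eq_or_eq_one_sub {p q : ℕ} (hp : p.Prime) (hq : q.Prime) (hne : p ≠ q)
    {u v : ZMod (p * q)} (hu : IsBadResidue u) : IsBadResidue v ↔ v = u ∨ v = 1 - u := by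
  have : Fact p.Prime := ⟨hp⟩
  have : Fact q.Prime := ⟨hq⟩
  let e := ZMod.chineseRemainder ((Nat.coprime_primes hp hq).mpr hne)
  rw [← map_iff e] at hu ⊢
  rw [prod_iff_eq_or_eq_one_sub hu, ← map_one e, ← map_sub, e.injective.eq_iff, e.injective.eq_iff]

theorem natCast_iff {n y : ℕ} (hy : 1 ≤ y) :
    IsBadResidue (y : ZMod n) ↔ y.gcd n ≠ 1 ∧ (y - 1).gcd n ≠ 1 := by
  rw [IsBadResidue, ← Nat.cast_pred hy, ZMod.isUnit_iff_coprime, ZMod.isUnit_iff_coprime,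
    Nat.Coprime, Nat.Coprime]

theorem not_modEq_sub_add_one {n x : ℕ} (hx : x ≤ n) (hbad : IsBadResidue (x : ZMod n)) :
    ¬x ≡ n - x + 1 [MOD n] := by
  rw [← ZMod.natCast_eq_natCast_iff, natCast_sub_add_one_eq_one_sub hx]
  exact hbad.ne_one_sub

theorem natCast_iff_modEq {p q x : ℕ} (hp : p.Prime) (hq : q.Prime) (hne : p ≠ q)
    (hx : x ≤ p * q) (hbad : IsBadResidue (x : ZMod (p * q))) (y : ℕ) :
    IsBadResidue (y : ZMod (p * q)) ↔
      y ≡ x [MOD p * q] ∨ y ≡ p * q - x + 1 [MOD p * q] := by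
  rw [← ZMod.natCast_eq_natCast_iff, ← ZMod.natCast_eq_natCast_iff,
    natCast_sub_add_one_eq_one_sub hx]
  exact hbad.zmod_iff_eq_or_eq_one_sub hp hq hne

end IsBadResidue

theorem gcd_pow_mul_pow_eq_one_iff {k l : ℕ} (hk : 1 ≤ k) (hl : 1 ≤ l) (y a b : ℕ) :
    y.gcd (a ^ k * b ^ l) = 1 ↔ y.gcd (a * b) = 1 := by
  simp only [← Nat.coprime_iff_gcd_eq_one, Nat.coprime_mul_iff_right, Nat.coprime_pow_right_iff hk,
    Nat.coprime_pow_right_iff hl]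

theorem lt_mul_and_modEq_iff {M r : ℕ} (hr : r < M) (N y : ℕ) :
    y < N * M ∧ y ≡ r [MOD M] ↔ ∃ i < N, y = r + i * M := by
  constructor
  · rintro ⟨hy, hmod⟩
    refine ⟨y / M, Nat.div_lt_of_lt_mul (by rwa [mul_comm]), ?_⟩
    rw [← Nat.mod_eq_of_modEq hmod hr, Nat.mod_add_div']
  · rintro ⟨i, hi, rfl⟩
    refine ⟨?_, by simp [Nat.ModEq]⟩
    calc r + i * M < (i + 1) * M := by rw [add_one_mul]; omega
      _ ≤ N * M := Nat.mul_le_mul_right M hi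

theorem card_filter_modEq_range_mul {M : ℕ} (hM : 0 < M) (N r : ℕ) :
    ((Finset.range (N * M)).filter (· ≡ r [MOD M])).card = N := by
  rw [← Nat.count_eq_card_filter_range, Nat.count_modEq_card _ hM]
  simp [hM]

theorem card_filter_modEq_or_modEq_range_mul {M : ℕ} (hM : 0 < M) (N : ℕ) {r s : ℕ}
    (hrs : ¬r ≡ s [MOD M]) :
    ((Finset.range (N * M)).filter fun y => y ≡ r [MOD M] ∨ y ≡ s [MOD M]).card = 2 * N := by
  have hdisj : Disjoint ((Finset.range (N * M)).filter (· ≡ r [MOD M]))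
      ((Finset.range (N * M)).filter (· ≡ s [MOD M])) :=
    Finset.disjoint_filter.mpr fun _ _ hr hs => hrs (hr.symm.trans hs)
  rw [Finset.filter_or, Finset.card_union_of_disjoint hdisj, card_filter_modEq_range_mul hM,
    card_filter_modEq_range_mul hM, two_mul]

theorem one_lt_and_gcd_ne_one_iff_modEq {p q k l : ℕ} (hp : p.Prime) (hq : q.Prime) (hne : p ≠ q)
    (hk : 1 ≤ k) (hl : 1 ≤ l) {x : ℕ} (hx1 : 1 < x) (hx2 : x < p * q)
    (hbad : IsBadResidue (x : ZMod (p * q))) (y : ℕ) :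
    (1 < y ∧ y.gcd (p ^ k * q ^ l) ≠ 1 ∧ (y - 1).gcd (p ^ k * q ^ l) ≠ 1) ↔
      y ≡ x [MOD p * q] ∨ y ≡ p * q - x + 1 [MOD p * q] := by
  have one_lt_of_modEq {r : ℕ} (hr1 : 1 < r) (hr2 : r < p * q) (h : y ≡ r [MOD p * q]) : 1 < y :=
    hr1.trans_le (Nat.mod_eq_of_modEq h hr2 ▸ Nat.mod_le y (p * q))
  simp only [ne_eq, gcd_pow_mul_pow_eq_one_iff hk hl]
  rw [← IsBadResidue.natCast_iff_modEq hp hq hne hx2.le hbad]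
  refine ⟨fun ⟨hy, h⟩ => (IsBadResidue.natCast_iff hy.le).mpr h, fun h => ?_⟩
  have hy : 1 < y := by
    rcases (IsBadResidue.natCast_iff_modEq hp hq hne hx2.le hbad y).mp h with h | h
    · exact one_lt_of_modEq hx1 hx2 h
    · exact one_lt_of_modEq (by omega) (by omega) h
  exact ⟨hy, (IsBadResidue.natCast_iff hy.le).mp h⟩

theorem pow_mul_pow_eq_mul_mul {M : Type*} [CommMonoid M] {k l : ℕ} (hk : 1 ≤ k) (hl : 1 ≤ l)
    (a b : M) : a ^ k * b ^ l = a ^ (k - 1) * b ^ (l - 1) * (a * b) := by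
  rw [mul_mul_mul_comm, pow_sub_one_mul (by omega), pow_sub_one_mul (by omega)]

theorem count_bad_residues_general (p q k l : ℕ) (hp : p.Prime) (hq : q.Prime) (hne : p ≠ q)
    (hk : 1 ≤ k) (hl : 1 ≤ l) (x x' : ℕ) (hx1 : 1 < x) (hx2 : x < p * q)
    (hgx : Nat.gcd x (p * q) ≠ 1) (hgx1 : Nat.gcd (x - 1) (p * q) ≠ 1)
    (hx' : x' = p * q - x + 1) :
    (((Finset.range (p ^ k * q ^ l)).filter fun y =>
      1 < y ∧ Nat.gcd y (p ^ k * q ^ l) ≠ 1 ∧ Nat.gcd (y - 1) (p ^ k * q ^ l) ≠ 1).card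
        = 2 * (p ^ (k - 1) * q ^ (l - 1))) ∧
    ∀ y : ℕ,
      (1 < y ∧ y < p ^ k * q ^ l ∧
        Nat.gcd y (p ^ k * q ^ l) ≠ 1 ∧ Nat.gcd (y - 1) (p ^ k * q ^ l) ≠ 1) ↔
      ∃ lam < p ^ (k - 1) * q ^ (l - 1),
        y = x + lam * (p * q) ∨ y = x' + lam * (p * q) := by
  have hbad : IsBadResidue (x : ZMod (p * q)) := (IsBadResidue.natCast_iff hx1.le).mpr ⟨hgx, hgx1⟩
  have hiff := one_lt_and_gcd_ne_one_iff_modEq hp hq hne hk hl hx1 hx2 hbad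
  have hx'2 : x' < p * q := by omega
  rw [← hx'] at hiff
  constructor
  · simp_rw [hiff, pow_mul_pow_eq_mul_mul hk hl]
    exact card_filter_modEq_or_modEq_range_mul (Nat.mul_pos hp.pos hq.pos) _
      (hx' ▸ hbad.not_modEq_sub_add_one hx2.le)
  · intro y
    simp only [and_or_left, exists_or]
    rw [and_left_comm, hiff, pow_mul_pow_eq_mul_mul hk hl, and_or_left,
      lt_mul_and_modEq_iff hx2, lt_mul_and_modEq_iff hx'2]

/-- for distinct odd primes p, q and k ≥ 1, there are exactly
2·p^(k-1) integers y with 1 < y < p^k·q, gcd(y, p^k·q) ≠ 1 and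
gcd(y-1, p^k·q) ≠ 1, and they are precisely the numbers x + λpq and
x' + λpq with 0 ≤ λ ≤ p^(k-1) - 1, where x and x' = pq - x + 1 are the two
integers in (1, pq) of Lemma (Statement 5). -/
theorem count_bad_residues (p q k : ℕ) (hp : p.Prime) (hq : q.Prime)
    (hop : Odd p) (hoq : Odd q) (hne : p ≠ q) (hk : 1 ≤ k)
    (x x' : ℕ) (hx1 : 1 < x) (hx2 : x < p * q)
    (hgx : Nat.gcd x (p * q) ≠ 1) (hgx1 : Nat.gcd (x - 1) (p * q) ≠ 1)
    (hx' : x' = p * q - x + 1) :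
    (((Finset.range (p ^ k * q)).filter fun y =>
      1 < y ∧ Nat.gcd y (p ^ k * q) ≠ 1 ∧ Nat.gcd (y - 1) (p ^ k * q) ≠ 1).card
        = 2 * p ^ (k - 1)) ∧
    ∀ y : ℕ,
      (1 < y ∧ y < p ^ k * q ∧
        Nat.gcd y (p ^ k * q) ≠ 1 ∧ Nat.gcd (y - 1) (p ^ k * q) ≠ 1) ↔
      ∃ lam : ℕ, lam ≤ p ^ (k - 1) - 1 ∧
        (y = x + lam * (p * q) ∨ y = x' + lam * (p * q)) := by
  simpa [Nat.le_sub_one_iff_lt, pow_pos hp.pos] using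
    count_bad_residues_general p q k 1 hp hq hne hk le_rfl x x' hx1 hx2 hgx hgx1 hx'
end

section
/- Let m = pq where p and q are distinct odd primes, and let n be a positive integer. Then the crown C_m ⊙ K̄_n is perfect super edge-magic: for every integer k with 2mn + (5m+3)/2 ≤ k ≤ 3mn + (5m+3)/2 there exists a super edge-magic labeling of C_m ⊙ K̄_n with valence k, and conversely every super edge-magic labeling of C_m ⊙ K̄_n has valence in this range. -/
/-!
Vertex labels that are consecutive integers extend to a super edge-magic labeling as soon as the
endpoint sums of the edges are consecutive too, and the least sum `a` then fixes the valence. In the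
crown, let the pendants of `v_i` together with the predecessor of `v_i` on the cycle carry all
the labels (counted from `0`) of one residue class `c i` modulo `m`. The sums of the pendant edges
at `v_i` and of the cycle edge ending there form a residue class shifted by the label of `v_i`.
These shifted classes fit together if the label of `v_i` is `a + σ (c i) - c i` for a permutation
`σ` of the residues; as that label must lie in the class `c (i + 1)`, the residues `c` have to run
through a single cycle of `e ↦ a + σ e - e` modulo `m`.

Such a `σ`, with displacements below `m / 2` so that all labels stay in range, is built one prime
factor `p` of `m` at a time. On the lowest base-`p` digit it is `x ↦ 2 * x + b` with `b ∈ {0, 1}`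
chosen so that `a + b` is prime to `p`: the displacement map then translates this digit by `a + b`,
its `p`-th iterate fixes the digit `0`, and there it acts on the remaining digits as a displacement
map for `m / p` with another value of `a`.

Conversely, adding the magic equations over all edges shows that the valence determines the sum of
the cycle labels, which are `m` distinct elements of `{1, …, m * (n + 1)}`.
-/

open Equiv Function

theorem range_add_one_eq_Icc {V : Type*} {P : ℕ} (α : V ≃ Fin P) :
    Set.range (fun v => (α v : ℕ) + 1) = Set.Icc 1 P := by
  ext k
  constructor
  · rintro ⟨v, rfl⟩
    exact ⟨Nat.le_add_left 1 _, (α v).isLt⟩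
  · rintro ⟨h1, hP⟩
    exact ⟨α.symm ⟨k - 1, by omega⟩, by simp; omega⟩

theorem range_sub_eq_Ioc {E : Type*} {Q : ℕ} (β : E ≃ Fin Q) (P : ℕ) :
    Set.range (fun e => P + Q - (β e : ℕ)) = Set.Ioc P (P + Q) := by
  ext k
  constructor
  · rintro ⟨e, rfl⟩
    have := (β e).isLt
    exact ⟨by change P < P + Q - (β e : ℕ); omega, Nat.sub_le _ _⟩
  · rintro ⟨hP, hQ⟩
    exact ⟨β.symm ⟨P + Q - k, by omega⟩, by simp; omega⟩

theorem exists_isSuperEdgeMagic_of_endpoint_sums {V E : Type} [Fintype V] [Fintype E]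
    {ends : E → V × V} {s P Q : ℕ} (α : V ≃ Fin P) (β : E ≃ Fin Q)
    (h : ∀ e, (α (ends e).1 : ℕ) + α (ends e).2 = s + β e) :
    ∃ fv fe, IsSuperEdgeMagic ends fv fe (s + 2 + P + Q) := by
  have hP : Fintype.card V = P := by simpa using Fintype.card_congr α
  have hQ : Fintype.card E = Q := by simpa using Fintype.card_congr β
  refine ⟨fun v => α v + 1, fun e => P + Q - β e, ⟨?inj, ?range, ?valence⟩, ?vertexRange⟩
  case inj =>
    refine Injective.sumElim (fun u v huv => α.injective (Fin.ext (by simpa using huv)))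
      (fun d e hde => β.injective (Fin.ext ?_)) fun v e => ?_
    · have := (β d).isLt
      have := (β e).isLt
      omega
    · have := (α v).isLt
      have := (β e).isLt
      omega
  case range =>
    rw [Set.Sum.elim_range, range_add_one_eq_Icc, range_sub_eq_Ioc, hP, hQ]
    ext k
    simp only [Set.mem_union, Set.mem_Icc, Set.mem_Ioc]
    omega
  case valence =>
    intro e
    have := h e
    have := (β e).isLt
    change (α (ends e).1 + 1 : ℕ) + (P + Q - β e) + (α (ends e).2 + 1) = s + 2 + P + Q
    omega
  case vertexRange => rw [range_add_one_eq_Icc, hP]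

theorem two_mul_sum_eq_of_range_eq_Icc {ι : Type*} [Fintype ι] {f : ι → ℕ} {N : ℕ}
    (hf : Injective f) (h : Set.range f = Set.Icc 1 N) : 2 * ∑ i, f i = N * (N + 1) := by
  classical
  have himage : Finset.univ.image f = Finset.Icc 1 N := Finset.coe_injective (by simpa using h)
  have hsum : ∑ i, f i = ∑ x ∈ Finset.Icc 1 N, x := by
    rw [← himage, Finset.sum_image hf.injOn]
  have hgauss (r : ℕ) : 2 * ∑ x ∈ Finset.Icc 1 r, x = r * (r + 1) := by
    induction r with
    | zero => rfl
    | succ r ih => rw [Finset.sum_Icc_succ_top r.succ_pos, mul_add, ih]; ring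
  rw [hsum, hgauss]

theorem card_mul_le_two_mul_sum {ι : Type*} [Fintype ι] {f : ι → ℤ} {c : ℤ}
    (hf : Injective f) (hc : ∀ i, c ≤ f i) :
    Fintype.card ι * (2 * c + Fintype.card ι - 1) ≤ 2 * ∑ i, f i := by
  classical
  have h := Finset.sum_range_le_sum (s := Finset.univ.image f) (c := c) (by simpa using hc)
  rw [Finset.card_image_of_injective _ hf, Finset.card_univ, Finset.sum_image hf.injOn] at h
  have hgauss (r : ℕ) : 2 * ∑ i ∈ Finset.range r, (c + i) = r * (2 * c + r - 1) := by
    induction r with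
    | zero => simp
    | succ r ih => rw [Finset.sum_range_succ, mul_add, ih]; push_cast; ring
  linarith [hgauss (Fintype.card ι)]

theorem two_mul_sum_le_card_mul {ι : Type*} [Fintype ι] {f : ι → ℤ} {c : ℤ}
    (hf : Injective f) (hc : ∀ i, f i ≤ c) :
    2 * ∑ i, f i ≤ Fintype.card ι * (2 * c + 1 - Fintype.card ι) := by
  have h := card_mul_le_two_mul_sum (f := fun i => -f i) (c := -c)
    (neg_injective.comp hf) (fun i => neg_le_neg (hc i))
  rw [Finset.sum_neg_distrib] at h
  linarith

theorem IsSuperEdgeMagic.injective_vertex {V E : Type} [Fintype V] [Fintype E]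
    {ends : E → V × V} {fv : V → ℕ} {fe : E → ℕ} {k : ℕ} (H : IsSuperEdgeMagic ends fv fe k) :
    Injective fv :=
  H.1.1.comp Sum.inl_injective

theorem IsSuperEdgeMagic.two_mul_sum_endpoints {V E : Type} [Fintype V] [Fintype E]
    {ends : E → V × V} {fv : V → ℕ} {fe : E → ℕ} {k : ℕ} (H : IsSuperEdgeMagic ends fv fe k) :
    2 * ∑ e, (fv (ends e).1 + fv (ends e).2) +
      Fintype.card E * (2 * Fintype.card V + Fintype.card E + 1) = 2 * Fintype.card E * k := by
  have hvertex := two_mul_sum_eq_of_range_eq_Icc H.injective_vertex H.2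
  obtain ⟨⟨hinj, hrange, hvalence⟩, -⟩ := H
  have hall := two_mul_sum_eq_of_range_eq_Icc hinj hrange
  simp only [Fintype.sum_sum_type, Sum.elim_inl, Sum.elim_inr] at hall
  have hsum : ∑ e, (fv (ends e).1 + fv (ends e).2) + ∑ e, fe e = Fintype.card E * k := by
    rw [← Finset.sum_add_distrib, ← smul_eq_mul, ← Finset.card_univ, ← Finset.sum_const]
    exact Finset.sum_congr rfl fun e _ => by rw [← hvalence e]; ring
  linarith

/-! ### Endpoint sums in the crown -/

theorem crownEnds_inl {m n : ℕ} (i : Fin m) :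
    crownEnds m n (Sum.inl i) = (Sum.inl i, Sum.inl (finRotate m i)) := by
  have := i.neZero
  simp [crownEnds, Fin.ext_iff, Fin.val_add]

theorem crownEnds_inr {m n : ℕ} (z : Fin m × Fin n) :
    crownEnds m n (Sum.inr z) = (Sum.inl z.1, Sum.inr z) := rfl

theorem sum_crownEnds {m n : ℕ} (f : Fin m ⊕ Fin m × Fin n → ℕ) :
    ∑ e, (f (crownEnds m n e).1 + f (crownEnds m n e).2) =
      (n + 1) * ∑ i, f (Sum.inl i) + ∑ v, f v := by
  have hrotate : ∑ i, f (Sum.inl (finRotate m i)) = ∑ i, f (Sum.inl i) :=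
    Equiv.sum_comp (finRotate m) fun i => f (Sum.inl i)
  simp only [Fintype.sum_sum_type, Fintype.sum_prod_type, crownEnds_inl, crownEnds_inr,
    Finset.sum_add_distrib, hrotate, Finset.sum_const, Finset.card_univ, Fintype.card_fin,
    smul_eq_mul, ← Finset.mul_sum]
  ring

theorem IsSuperEdgeMagic.sum_cycle_vertices {m n : ℕ} {fv fe} {k : ℕ}
    (H : IsSuperEdgeMagic (crownEnds m n) fv fe k) :
    ∑ i, fv (Sum.inl i) + m * (2 * (m * (n + 1)) + 1) = m * k := by
  have hcard : Fintype.card (Fin m ⊕ Fin m × Fin n) = m * (n + 1) := by simp; ring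
  have hvertex := two_mul_sum_eq_of_range_eq_Icc H.injective_vertex H.2
  have hends := H.two_mul_sum_endpoints
  rw [sum_crownEnds, hcard] at hends
  rw [hcard] at hvertex
  have hscaled : (n + 1) * (∑ i, fv (Sum.inl i) + m * (2 * (m * (n + 1)) + 1)) =
      (n + 1) * (m * k) := by
    linarith
  exact Nat.eq_of_mul_eq_mul_left n.succ_pos hscaled

theorem IsSuperEdgeMagic.crown_valence_bounds {m n : ℕ} (hm : 0 < m) {fv fe} {k : ℕ}
    (H : IsSuperEdgeMagic (crownEnds m n) fv fe k) :
    4 * (m * n) + (5 * m + 3) ≤ 2 * k ∧ 2 * k ≤ 6 * (m * n) + (5 * m + 3) := by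
  have hcycle : Injective fun i : Fin m => (fv (Sum.inl i) : ℤ) :=
    Nat.cast_injective.comp (H.injective_vertex.comp Sum.inl_injective)
  have hmem (i : Fin m) : fv (Sum.inl i) ∈ Set.Icc 1 (m + m * n) := by
    have h := H.2.subset (Set.mem_range_self (Sum.inl i))
    simpa using h
  have hlower := card_mul_le_two_mul_sum hcycle (c := 1) fun i => by exact_mod_cast (hmem i).1
  have hupper := two_mul_sum_le_card_mul hcycle (c := m + m * n)
    fun i => by exact_mod_cast (hmem i).2
  have hsum : ∑ i, (fv (Sum.inl i) : ℤ) + m * (2 * (m * (n + 1)) + 1) = m * k := by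
    exact_mod_cast H.sum_cycle_vertices
  rw [Fintype.card_fin] at hlower hupper
  zify at hm ⊢
  constructor <;> refine le_of_mul_le_mul_left ?_ hm <;> linarith

/-! ### Permutations with cyclic displacement -/

theorem minimalPeriod_eq_of_semiconj {α β : Type*} {ι : β → α} {f : α → α} {g : β → β}
    (hι : Injective ι) (h : Semiconj ι g f) (y : β) :
    minimalPeriod f (ι y) = minimalPeriod g y :=
  minimalPeriod_eq_minimalPeriod_iff.2 fun n => by
    rw [IsPeriodicPt, IsFixedPt, ← (h.iterate_right n).eq, hι.eq_iff, IsPeriodicPt, IsFixedPt]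

theorem minimalPeriod_eq_minimalPeriod_iterate_mul {α : Type*} {f : α → α} {x : α} {p : ℕ}
    (hp : p ∣ minimalPeriod f x) : minimalPeriod f x = minimalPeriod f^[p] x * p := by
  rcases eq_or_ne p 0 with rfl | h0
  · rw [mul_zero, Nat.eq_zero_of_zero_dvd hp]
  · rw [minimalPeriod_iterate_eq_div_gcd h0, Nat.gcd_eq_right hp, Nat.div_mul_cancel hp]

section Rotation

variable {N p : ℕ} {f : Fin N → Fin N} {s : ℤ}

theorem iterate_modEq_add_mul (hf : ∀ e, (f e : ℤ) ≡ e + s [ZMOD p]) (e : Fin N) (r : ℕ) :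
    (f^[r] e : ℤ) ≡ e + r * s [ZMOD p] := by
  induction r with
  | zero => simp [Int.ModEq.refl]
  | succ r ih =>
    rw [iterate_succ_apply']
    calc (f (f^[r] e) : ℤ) ≡ f^[r] e + s [ZMOD p] := hf _
      _ ≡ e + r * s + s [ZMOD p] := ih.add_right s
      _ = e + (r + 1 : ℕ) * s := by push_cast; ring

theorem dvd_minimalPeriod_of_modEq_add (hf : ∀ e, (f e : ℤ) ≡ e + s [ZMOD p])
    (hs : IsCoprime (p : ℤ) s) (e : Fin N) : p ∣ minimalPeriod f e := by
  have h := iterate_modEq_add_mul hf e (minimalPeriod f e)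
  rw [iterate_minimalPeriod] at h
  have hdvd : (p : ℤ) ∣ minimalPeriod f e * s := by simpa using h.dvd
  exact Int.natCast_dvd_natCast.1 (hs.dvd_of_dvd_mul_right hdvd)

theorem iterate_succ_modEq_add_sum {x : Fin N} {step : ℤ → ℤ}
    (hf : ∀ e, (f e : ℤ) ≡ e + s [ZMOD p]) (hs : IsCoprime (p : ℤ) s)
    (hstep : ∀ e : Fin N, ¬ (p : ℤ) ∣ e → (f e : ℤ) ≡ e + step e [ZMOD N])
    (hperiodic : ∀ u v, u ≡ v [ZMOD p] → step u = step v)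
    (hx : (p : ℤ) ∣ x) {r : ℕ} (hr : r < p) :
    (f^[r + 1] x : ℤ) ≡ f x + ∑ i ∈ Finset.Ico 1 (r + 1), step (i * s) [ZMOD N] := by
  induction r with
  | zero => simp [Int.ModEq.refl]
  | succ r ih =>
    have hdigit : (f^[r + 1] x : ℤ) ≡ (r + 1 : ℕ) * s [ZMOD p] := by
      simpa using (iterate_modEq_add_mul hf x (r + 1)).trans
        ((Int.modEq_zero_iff_dvd.2 hx).add_right _)
    have hndvd : ¬ (p : ℤ) ∣ f^[r + 1] x := fun h => by
      have h' : (p : ℤ) ∣ (r + 1 : ℕ) * s :=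
        Int.modEq_zero_iff_dvd.1 (hdigit.symm.trans (Int.modEq_zero_iff_dvd.2 h))
      have := Nat.le_of_dvd r.succ_pos
        (Int.natCast_dvd_natCast.1 (hs.dvd_of_dvd_mul_right h'))
      omega
    rw [iterate_succ_apply', Finset.sum_Ico_succ_top (Nat.le_add_left 1 r), ← add_assoc,
      ← hperiodic _ _ hdigit]
    exact (hstep _ hndvd).trans ((ih (by omega)).add_right _)

end Rotation

/-- Base-`p` digits on `{0, …, Mp - 1}`: the pair `(x, y)` stands for `x + p * y`. -/
def digitEquiv (p M : ℕ) : Fin p × Fin M ≃ Fin (M * p) :=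
  (prodComm _ _).trans finProdFinEquiv

@[simp]
theorem coe_digitEquiv {p M : ℕ} (z : Fin p × Fin M) : (digitEquiv p M z : ℕ) = z.1 + p * z.2 :=
  rfl

/-- The permutation of the base-`p` digit pairs that applies `ρ` to the low digit `x` and `φ x` to
the high digit. -/
def digitShear {p M : ℕ} (ρ : Perm (Fin p)) (φ : Fin p → Perm (Fin M)) : Perm (Fin (M * p)) :=
  (digitEquiv p M).permCongr (prodShear ρ φ)

@[simp]
theorem digitShear_digitEquiv {p M : ℕ} (ρ : Perm (Fin p)) (φ : Fin p → Perm (Fin M)) (x : Fin p)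
    (y : Fin M) : digitShear ρ φ (digitEquiv p M (x, y)) = digitEquiv p M (ρ x, φ x y) := by
  simp [digitShear, prodShear]

theorem two_mul_abs_digitShear_sub_lt {p M : ℕ} {ρ : Perm (Fin p)} {φ : Fin p → Perm (Fin M)}
    (hρ : ∀ x, 2 * |(ρ x : ℤ) - x| < p) (hφ : ∀ x y, 2 * |(φ x y : ℤ) - y| < M)
    (e : Fin (M * p)) : 2 * |(digitShear ρ φ e : ℤ) - e| < (M * p : ℕ) := by
  obtain ⟨⟨x, y⟩, rfl⟩ := (digitEquiv p M).surjective e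
  rw [digitShear_digitEquiv]
  push_cast [coe_digitEquiv]
  calc 2 * |(ρ x + p * φ x y : ℤ) - (x + p * y)|
      = 2 * |(ρ x - x : ℤ) + p * (φ x y - y)| := by ring_nf
    _ ≤ 2 * (|(ρ x - x : ℤ)| + p * |(φ x y - y : ℤ)|) := by
        grw [abs_add_le, abs_mul, Nat.abs_cast]
    _ < p + p * (M - 1) := by
        have := hρ x
        have := mul_le_mul_of_nonneg_left (Int.le_sub_one_of_lt (hφ x y)) p.cast_nonneg
        linarith
    _ = M * p := by ring

/-- The affine permutation `e ↦ 2 * e + b` of the residues modulo an odd `m`. -/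
noncomputable def doublingPerm {m : ℕ} (hm : Odd m) (b : ℕ) : Perm (Fin m) :=
  Equiv.ofBijective (fun e => ⟨(2 * e + b) % m, Nat.mod_lt _ e.pos⟩) <|
    Finite.injective_iff_bijective.1 fun d e h => by
      have h2 : 2 * (d : ℕ) ≡ 2 * e [MOD m] := Nat.ModEq.add_right_cancel' b (Fin.ext_iff.1 h)
      have := Nat.ModEq.cancel_left_of_coprime (Nat.coprime_two_right.2 hm) h2
      exact Fin.ext (this.eq_of_lt_of_lt d.isLt e.isLt)

@[simp]
theorem coe_doublingPerm {m : ℕ} (hm : Odd m) (b : ℕ) (e : Fin m) :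
    (doublingPerm hm b e : ℕ) = (2 * e + b) % m :=
  rfl

theorem two_mul_abs_doublingPerm_sub_lt {m b : ℕ} (hm : Odd m) (hb : b ≤ 1) (e : Fin m) :
    2 * |(doublingPerm hm b e : ℤ) - e| < m := by
  have he := e.isLt
  have hmod : (2 * e + b) % m = 2 * e + b ∨ (2 * e + b) % m + m = 2 * e + b := by
    rcases lt_or_ge (2 * (e : ℕ) + b) m with hlt | hge
    · exact .inl (Nat.mod_eq_of_lt hlt)
    · right
      rw [Nat.mod_eq_sub_mod hge, Nat.mod_eq_of_lt (by omega), Nat.sub_add_cancel hge]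
  have hlt := Nat.mod_lt (2 * e + b) e.pos
  rw [coe_doublingPerm]
  generalize (2 * (e : ℕ) + b) % m = r at *
  obtain ⟨h, rfl⟩ := hm
  rcases abs_cases ((r : ℤ) - e) with ⟨habs, -⟩ | ⟨habs, -⟩ <;> omega

/-- `σ` displaces every residue by less than `m / 2`, and its displacement `e ↦ σ e - e`, translated
by `a` and reduced modulo `m`, is a map `f` running through all residues in one cycle, the orbit of
`x`. -/
structure IsCyclicDisplacement {m : ℕ} (a : ℤ) (σ : Perm (Fin m)) (f : Fin m → Fin m)
    (x : Fin m) : Prop where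
  two_mul_abs_sub_lt : ∀ e, 2 * |(σ e : ℤ) - e| < m
  modEq : ∀ e, (f e : ℤ) ≡ a + σ e - e [ZMOD m]
  minimalPeriod_eq : minimalPeriod f x = m

theorem exists_coe_fin_modEq {N : ℕ} (hN : 0 < N) (z : ℤ) : ∃ e : Fin N, (e : ℤ) ≡ z [ZMOD N] := by
  have hnonneg : 0 ≤ z % N := Int.emod_nonneg z (by omega)
  have hlt : z % N < N := Int.emod_lt_of_pos z (by omega)
  exact ⟨⟨(z % N).toNat, by omega⟩, by simp [Int.toNat_of_nonneg hnonneg, Int.mod_modEq]⟩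

theorem exists_isCoprime_add {p : ℕ} (hp : p.Prime) (a : ℤ) :
    ∃ b : ℕ, b ≤ 1 ∧ IsCoprime (p : ℤ) (a + b) := by
  have hp' := Nat.prime_iff_prime_int.1 hp
  by_cases h : (p : ℤ) ∣ a
  · refine ⟨1, le_rfl, hp'.irreducible.coprime_iff_not_dvd.2 fun h1 => hp'.not_dvd_one ?_⟩
    exact (dvd_add_right h).1 (by exact_mod_cast h1)
  · exact ⟨0, zero_le_one, hp'.irreducible.coprime_iff_not_dvd.2 (by simpa using h)⟩

section Lift

variable {p M : ℕ}

/-- The amount by which the displacement map of `doublingLift`, translated by `a`, moves a point `z`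
with nonzero low digit in base `p`. It depends only on that digit. -/
def digitStep (p : ℕ) (a b z : ℤ) : ℤ :=
  a + (2 * z + b) % p - 2 * (z % p)

theorem digitStep_congr {a b u v : ℤ} (h : u ≡ v [ZMOD p]) :
    digitStep p a b u = digitStep p a b v := by
  have hdouble : (2 * u + b) % p = (2 * v + b) % p := (h.mul_left 2).add_right b
  rw [digitStep, digitStep, hdouble, h.eq]

theorem digitStep_modEq (a b z : ℤ) : digitStep p a b z ≡ a + b [ZMOD p] := by
  calc digitStep p a b z ≡ a + (2 * z + b) - 2 * z [ZMOD p] :=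
        ((Int.mod_modEq _ _).add_left a).sub ((Int.mod_modEq z p).mul_left 2)
    _ = a + b := by ring

theorem dvd_sum_digitStep (a b s : ℤ) :
    (p : ℤ) ∣ ∑ i ∈ Finset.range p, digitStep p a b (i * s) := by
  have h : ∑ i ∈ Finset.range p, digitStep p a b (i * s) ≡ ∑ _i ∈ Finset.range p, (a + b)
      [ZMOD p] :=
    Int.ModEq.sum fun _ _ => digitStep_modEq a b _
  exact Int.modEq_zero_iff_dvd.1 (h.trans (Int.modEq_zero_iff_dvd.2 (by simp)))

/-- The permutation `x ↦ 2 * x + b` of the low digit, combined with `σ` on the high digit over the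
low digit `0` and with doubling of the high digit over the other low digits. -/
noncomputable def doublingLift (hp : Odd p) (hM : Odd M) (b : ℕ) (σ : Perm (Fin M)) :
    Perm (Fin (M * p)) :=
  digitShear (doublingPerm hp b) fun x => if (x : ℕ) = 0 then σ else doublingPerm hM 0

theorem two_mul_abs_doublingLift_sub_lt (hp : Odd p) (hM : Odd M) {b : ℕ} (hb : b ≤ 1)
    {σ : Perm (Fin M)} (hσ : ∀ y, 2 * |(σ y : ℤ) - y| < M) (e : Fin (M * p)) :
    2 * |(doublingLift hp hM b σ e : ℤ) - e| < (M * p : ℕ) := by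
  refine two_mul_abs_digitShear_sub_lt (two_mul_abs_doublingPerm_sub_lt hp hb) (fun x y => ?_) e
  split_ifs
  exacts [hσ y, two_mul_abs_doublingPerm_sub_lt hM zero_le_one y]

theorem doublingLift_sub_modEq (hp : Odd p) (hM : Odd M) (b : ℕ) (σ : Perm (Fin M))
    (e : Fin (M * p)) : (doublingLift hp hM b σ e : ℤ) - e ≡ e + b [ZMOD p] := by
  obtain ⟨⟨x, y⟩, rfl⟩ := (digitEquiv p M).surjective e
  have hlow (u v : ℤ) : u + p * v ≡ u [ZMOD p] := by simp [Int.ModEq]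
  rw [doublingLift, digitShear_digitEquiv]
  push_cast [coe_digitEquiv, coe_doublingPerm]
  calc ((2 * x + b) % p + p * _ - (x + p * y) : ℤ) ≡ 2 * x + b - x [ZMOD p] :=
        ((hlow _ _).trans (Int.mod_modEq _ _)).sub (hlow _ _)
    _ = x + b := by ring
    _ ≡ x + p * y + b [ZMOD p] := (hlow _ _).symm.add_right _

theorem doublingLift_sub_modEq_of_not_dvd (hp : Odd p) (hM : Odd M) (a : ℤ) (b : ℕ)
    (σ : Perm (Fin M)) {e : Fin (M * p)} (he : ¬ (p : ℤ) ∣ e) :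
    a + doublingLift hp hM b σ e - e ≡ e + digitStep p a b e [ZMOD (M * p : ℕ)] := by
  obtain ⟨⟨x, y⟩, rfl⟩ := (digitEquiv p M).surjective e
  have hx : (x : ℕ) ≠ 0 := fun h => he (by simp [coe_digitEquiv, h])
  have hxmod : (x : ℤ) % p = x := by exact_mod_cast Nat.mod_eq_of_lt x.isLt
  have hdigit : (x + p * y : ℤ) ≡ x [ZMOD p] := by simp [Int.ModEq]
  have hhigh : (p * ((2 * y) % M) : ℤ) ≡ p * (2 * y) [ZMOD p * M] := (Int.mod_modEq _ _).mul_left'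
  rw [doublingLift, digitShear_digitEquiv, if_neg hx]
  push_cast [coe_digitEquiv, coe_doublingPerm]
  rw [mul_comm (M : ℤ) p, digitStep_congr hdigit, digitStep, hxmod, add_zero]
  calc a + ((2 * x + b) % p + p * ((2 * y) % M)) - (x + p * y)
      ≡ a + ((2 * x + b) % p + p * (2 * y)) - (x + p * y) [ZMOD p * M] :=
        ((hhigh.add_left _).add_left _).sub_right _
    _ = x + p * y + (a + (2 * x + b) % p - 2 * x) := by ring

theorem doublingLift_digitEquiv_zero (hp : Odd p) (hM : Odd M) (a : ℤ) (b : ℕ) (σ : Perm (Fin M))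
    (y : Fin M) :
    a + doublingLift hp hM b σ (digitEquiv p M (⟨0, hp.pos⟩, y)) -
      digitEquiv p M (⟨0, hp.pos⟩, y) = digitStep p a b 0 + p * (σ y - y) := by
  rw [doublingLift, digitShear_digitEquiv, if_pos rfl]
  push_cast [coe_digitEquiv, coe_doublingPerm]
  rw [digitStep, mul_zero, zero_add, Int.zero_emod]
  ring

theorem iterate_digitEquiv_zero (hp : Odd p) {hM : Odd M} {a a' s : ℤ} {b : ℕ}
    {σ : Perm (Fin M)} {f : Fin (M * p) → Fin (M * p)} {g : Fin M → Fin M}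
    (hs : IsCoprime (p : ℤ) s) (hmod : ∀ e, (f e : ℤ) ≡ e + s [ZMOD p])
    (hf : ∀ e, (f e : ℤ) ≡ a + doublingLift hp hM b σ e - e [ZMOD (M * p : ℕ)])
    (hg : ∀ y, (g y : ℤ) ≡ a' + σ y - y [ZMOD M])
    (hsum : ∑ i ∈ Finset.range p, digitStep p a b (i * s) = p * a') (y : Fin M) :
    f^[p] (digitEquiv p M (⟨0, hp.pos⟩, y)) = digitEquiv p M (⟨0, hp.pos⟩, g y) := by
  set ι : Fin M → Fin (M * p) := fun y => digitEquiv p M (⟨0, hp.pos⟩, y)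
  have hι (y : Fin M) : (ι y : ℤ) = p * y := by simp [ι]
  have hfirst : (f (ι y) : ℤ) ≡ digitStep p a b 0 + p * (σ y - y) [ZMOD (M * p : ℕ)] :=
    doublingLift_digitEquiv_zero hp hM a b σ y ▸ hf (ι y)
  have hrest : (f^[p] (ι y) : ℤ) ≡ f (ι y) + ∑ i ∈ Finset.Ico 1 p, digitStep p a b (i * s)
      [ZMOD (M * p : ℕ)] := by
    have h := iterate_succ_modEq_add_sum hmod hs
      (fun e he => (hf e).trans (doublingLift_sub_modEq_of_not_dvd hp hM a b σ he))
      (fun u v => digitStep_congr) (hι y ▸ dvd_mul_right _ _) (Nat.sub_lt hp.pos one_pos)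
    rwa [Nat.sub_add_cancel (Nat.one_le_of_lt hp.pos)] at h
  have hcarry : (p * (a' + σ y - y) : ℤ) ≡ p * g y [ZMOD (M * p : ℕ)] := by
    rw [mul_comm M p, Nat.cast_mul]
    exact (hg y).symm.mul_left'
  have hvalue : (f^[p] (ι y) : ℤ) ≡ ι (g y) [ZMOD (M * p : ℕ)] := by
    rw [hι]
    rw [Finset.range_eq_Ico, Finset.sum_eq_sum_Ico_succ_bot hp.pos, Nat.cast_zero, zero_mul] at hsum
    calc (f^[p] (ι y) : ℤ)
        ≡ digitStep p a b 0 + p * (σ y - y) + ∑ i ∈ Finset.Ico 1 p, digitStep p a b (i * s)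
          [ZMOD (M * p : ℕ)] := hrest.trans (hfirst.add_right _)
      _ = p * (a' + σ y - y) := by linarith
      _ ≡ p * g y [ZMOD (M * p : ℕ)] := hcarry
  exact Fin.ext ((Int.natCast_modEq_iff.1 hvalue).eq_of_lt_of_lt (Fin.isLt _) (Fin.isLt _))

theorem exists_isCyclicDisplacement_mul (hp : p.Prime) (hpodd : Odd p) (hM : Odd M)
    (ih : ∀ a, ∃ (σ : Perm (Fin M)) (f : Fin M → Fin M) (x : Fin M), IsCyclicDisplacement a σ f x)
    (a : ℤ) : ∃ (σ : Perm (Fin (M * p))) (f : Fin (M * p) → Fin (M * p)) (x : Fin (M * p)),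
      IsCyclicDisplacement a σ f x := by
  obtain ⟨b, hb, hcoprime⟩ := exists_isCoprime_add hp a
  obtain ⟨a', hsum⟩ := dvd_sum_digitStep (p := p) a b (a + b)
  obtain ⟨σ, g, y, hσ⟩ := ih a'
  choose f hf using fun e : Fin (M * p) =>
    exists_coe_fin_modEq e.pos (a + doublingLift hpodd hM b σ e - e)
  have hmod (e : Fin (M * p)) : (f e : ℤ) ≡ e + (a + b) [ZMOD p] := by
    calc (f e : ℤ) ≡ a + (doublingLift hpodd hM b σ e - e) [ZMOD p] :=
          add_sub_assoc a _ _ ▸ (hf e).of_dvd (by simp)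
      _ ≡ a + (e + b) [ZMOD p] := (doublingLift_sub_modEq hpodd hM b σ e).add_left a
      _ = e + (a + b) := by ring
  refine ⟨doublingLift hpodd hM b σ, f, digitEquiv p M (⟨0, hp.pos⟩, y),
    two_mul_abs_doublingLift_sub_lt hpodd hM hb hσ.two_mul_abs_sub_lt, hf, ?_⟩
  have hsemiconj : Semiconj (fun y => digitEquiv p M (⟨0, hp.pos⟩, y)) g f^[p] := fun y =>
    (iterate_digitEquiv_zero hpodd hcoprime hmod hf hσ.modEq hsum y).symm
  have hinj : Injective fun y => digitEquiv p M (⟨0, hp.pos⟩, y) :=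
    (digitEquiv p M).injective.comp (Prod.mk_right_injective _)
  rw [minimalPeriod_eq_minimalPeriod_iterate_mul (dvd_minimalPeriod_of_modEq_add hmod hcoprime _),
    minimalPeriod_eq_of_semiconj hinj hsemiconj, hσ.minimalPeriod_eq]

end Lift

theorem exists_isCyclicDisplacement {m : ℕ} (hm : Odd m) (a : ℤ) :
    ∃ (σ : Perm (Fin m)) (f : Fin m → Fin m) (x : Fin m), IsCyclicDisplacement a σ f x := by
  induction m using induction_on_primes generalizing a with
  | zero => simp at hm
  | one => exact ⟨1, id, 0, by simp, by simp [Int.modEq_one], by simp⟩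
  | prime_mul p M hp ih =>
    obtain ⟨hpodd, hM⟩ := Nat.odd_mul.1 hm
    rw [mul_comm]
    exact exists_isCyclicDisplacement_mul hp hpodd hM (ih hM) a

/-! ### Labelings of the crown -/

/-- The grouping of the crown into `m` blocks that are to be labelled by residue classes modulo `m`.
As vertices, block `i` holds the `n` pendants of `i` and, in the slot `t i`, the cyclic predecessor
of `i`; as edges, it holds the pendant edges at `i` and the cycle edge ending at `i`. -/
def crownEquiv {m n : ℕ} (t : Fin m → Fin (n + 1)) : Fin m ⊕ Fin m × Fin n ≃ Fin m × Fin (n + 1) :=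
  (Equiv.sumCongr (finRotate m) (prodComm _ _)).trans <| optionProdEquiv.symm.trans <|
    (prodComm _ _).trans <| prodShear (Equiv.refl _) fun i => (finSuccEquiv' (t i)).symm

@[simp]
theorem crownEquiv_inl {m n : ℕ} (t : Fin m → Fin (n + 1)) (i : Fin m) :
    crownEquiv t (Sum.inl i) = (finRotate m i, t (finRotate m i)) := by
  simp [crownEquiv, prodShear, -finRotate_apply]

@[simp]
theorem crownEquiv_inr {m n : ℕ} (t : Fin m → Fin (n + 1)) (z : Fin m × Fin n) :
    crownEquiv t (Sum.inr z) = (z.1, (t z.1).succAbove z.2) := by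
  simp [crownEquiv, prodShear, -finRotate_apply]

theorem exists_isSuperEdgeMagic_crown_of_residues {m n a : ℕ} (c σ : Perm (Fin m)) (v : Fin m → ℕ)
    (hsum : ∀ i, v i + c i = a + σ (c i)) (hlt : ∀ i, v i < m * (n + 1))
    (hmod : ∀ i, v i % m = c (finRotate m i)) :
    ∃ fv fe, IsSuperEdgeMagic (crownEnds m n) fv fe (a + 2 + 2 * (m * (n + 1))) := by
  let t (i : Fin m) : Fin (n + 1) :=
    ⟨v ((finRotate m).symm i) / m, Nat.div_lt_of_lt_mul (hlt _)⟩
  let label (ρ : Perm (Fin m)) : Fin m ⊕ Fin m × Fin n ≃ Fin ((n + 1) * m) :=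
    (crownEquiv t).trans <| (ρ.prodCongr (Equiv.refl _)).trans (digitEquiv m (n + 1))
  have hlabel_inl (ρ : Perm (Fin m)) (i : Fin m) :
      (label ρ (Sum.inl i) : ℕ) = ρ (finRotate m i) + m * (v i / m) := by
    simp [label, t, -finRotate_apply, -finRotate_symm_apply]
  have hlabel_inr (ρ : Perm (Fin m)) (z : Fin m × Fin n) :
      (label ρ (Sum.inr z) : ℕ) = ρ z.1 + m * (t z.1).succAbove z.2 := by
    simp [label]
  have hcycle (i : Fin m) : (label c (Sum.inl i) : ℕ) = v i := by
    rw [hlabel_inl, ← hmod, Nat.mod_add_div]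
  have hendpoints (e : Fin m ⊕ Fin m × Fin n) :
      (label c (crownEnds m n e).1 : ℕ) + label c (crownEnds m n e).2 =
        a + label (c.trans σ) e := by
    rcases e with i | z
    · rw [crownEnds_inl, hlabel_inl, hcycle, hlabel_inl, trans_apply]
      linarith [hsum (finRotate m i)]
    · rw [crownEnds_inr, hcycle, hlabel_inr, hlabel_inr, trans_apply]
      linarith [hsum z.1]
  have h := exists_isSuperEdgeMagic_of_endpoint_sums (label c) (label (c.trans σ)) hendpoints
  rwa [mul_comm _ m, add_assoc, ← two_mul] at h

theorem exists_perm_finRotate_of_minimalPeriod {m : ℕ} {f : Fin m → Fin m} {x : Fin m}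
    (h : minimalPeriod f x = m) : ∃ c : Perm (Fin m), ∀ i, c (finRotate m i) = f (c i) := by
  have hinj : Injective fun i : Fin m => f^[i] x := fun i j hij =>
    Fin.ext <| iterate_injOn_Iio_minimalPeriod (by simp [h]) (by simp [h]) hij
  refine ⟨Equiv.ofBijective _ (Finite.injective_iff_bijective.1 hinj), fun i => ?_⟩
  have hmod := iterate_mod_minimalPeriod_eq (f := f) (x := x) (n := i + 1)
  rw [h] at hmod
  have := i.neZero
  simpa [Fin.val_add, iterate_succ_apply'] using hmod

theorem IsCyclicDisplacement.exists_isSuperEdgeMagic_crown {m n a : ℕ} {σ : Perm (Fin m)}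
    {f : Fin m → Fin m} {x : Fin m} (h : IsCyclicDisplacement a σ f x) (hlower : m ≤ 2 * a + 1)
    (hupper : 2 * a + m ≤ 2 * (m * (n + 1))) :
    ∃ fv fe, IsSuperEdgeMagic (crownEnds m n) fv fe (a + 2 + 2 * (m * (n + 1))) := by
  obtain ⟨c, hc⟩ := exists_perm_finRotate_of_minimalPeriod h.minimalPeriod_eq
  have hbound (i : Fin m) : (c i : ℕ) ≤ a + σ (c i) ∧ a + σ (c i) < m * (n + 1) + c i := by
    have := h.two_mul_abs_sub_lt (c i)
    have := le_abs_self ((σ (c i) : ℤ) - c i)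
    have := neg_abs_le ((σ (c i) : ℤ) - c i)
    omega
  refine exists_isSuperEdgeMagic_crown_of_residues c σ (fun i => a + σ (c i) - c i)
    (fun i => Nat.sub_add_cancel (hbound i).1)
    (fun i => (Nat.sub_lt_iff_lt_add' (hbound i).1).2 (by linarith [(hbound i).2])) fun i => ?_
  have hmod : (f (c i) : ℕ) ≡ a + σ (c i) - c i [MOD m] := by
    rw [← Int.natCast_modEq_iff, Nat.cast_sub (hbound i).1]
    exact_mod_cast h.modEq (c i)
  rw [hc, ← hmod, Nat.mod_eq_of_lt (f (c i)).isLt]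

theorem crown_pq_perfectSuperEdgeMagic_general (m n : ℕ) (hm : Odd m) :
    (∀ k : ℕ, 2 * m * n + (5 * m + 3) / 2 ≤ k → k ≤ 3 * m * n + (5 * m + 3) / 2 →
      ∃ fv fe, IsSuperEdgeMagic (crownEnds m n) fv fe k) ∧
    (∀ fv fe k, IsSuperEdgeMagic (crownEnds m n) fv fe k →
      2 * m * n + (5 * m + 3) / 2 ≤ k ∧ k ≤ 3 * m * n + (5 * m + 3) / 2) := by
  rw [mul_assoc 2, mul_assoc 3]
  have ⟨h, hh⟩ := hm
  constructor
  · intro k hlower hupper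
    rw [show k = k - 2 - 2 * (m * (n + 1)) + 2 + 2 * (m * (n + 1)) by rw [mul_add_one]; omega]
    obtain ⟨σ, f, x, hσ⟩ := exists_isCyclicDisplacement hm (k - 2 - 2 * (m * (n + 1)) : ℕ)
    apply hσ.exists_isSuperEdgeMagic_crown <;> rw [mul_add_one] <;> omega
  · intro fv fe k H
    have := H.crown_valence_bounds hm.pos
    omega

/-- for m = pq a product of two distinct odd primes and n ≥ 1,
the crown C_m ⊙ K̄_n is perfect super edge-magic: its super edge-magic
valences are exactly the integers in [2mn + (5m+3)/2, 3mn + (5m+3)/2]. -/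
theorem crown_pq_perfectSuperEdgeMagic (p q n m : ℕ) (hp : p.Prime) (hq : q.Prime)
    (hop : Odd p) (hoq : Odd q) (hne : p ≠ q) (hn : 1 ≤ n) (hm : m = p * q) :
    (∀ k : ℕ, 2 * m * n + (5 * m + 3) / 2 ≤ k → k ≤ 3 * m * n + (5 * m + 3) / 2 →
      ∃ fv fe, IsSuperEdgeMagic (crownEnds m n) fv fe k) ∧
    (∀ fv fe k, IsSuperEdgeMagic (crownEnds m n) fv fe k →
      2 * m * n + (5 * m + 3) / 2 ≤ k ∧ k ≤ 3 * m * n + (5 * m + 3) / 2) := by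
  subst hm
  exact crown_pq_perfectSuperEdgeMagic_general _ n (hop.mul hoq)
end

section
/- Let m ≥ 3 and n ≥ 1 be integers. If the cycle C_m admits an edge-magic labeling with valence v, then for each integer r with 1 ≤ r ≤ n+1 the crown C_m ⊙ K̄_n admits an edge-magic labeling with valence (n+1)(v − 2) + r + 1. Consequently, if g and g′ are edge-magic labelings of C_m with val(g) < val(g′), then all n+1 valences produced from g are strictly smaller than all n+1 valences produced from g′. -/
/-!
Orient the cycle cyclically and the looped star `K_{1,n}^l` away from its center. The tensor product
of these two digraphs is the crown. In a tensor product the two labelings combine as digits: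
writing `N` for the number of vertices of the second factor, the vertex `(a, x)` gets the `g x`-th
label of the `f a`-th block of `N` consecutive integers, and the arc `(e, y)` the `(g y - N)`-th
label of the `f e`-th block. If `g` is super edge-magic and the second factor has `N` arcs, then
`g y - N` runs through `{1, …, N}`, so these labels are consecutive, and the sums of both digits are
constant along arcs: from valences `v` and `k` one gets the valence `N (v - 3) + k - N`. Finally,
giving the center of `K_{1,n}^l` any label `r ∈ {1, …, n + 1}` extends to a super edge-magic
labeling of valence `k = 2 N + 1 + r`, where `N = n + 1`.
-/

open Set

section BlockLabel

/-- The `c`-th element of the `a`-th block when the positive integers are cut into blocks of `N`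
consecutive ones; blocks and positions within a block are counted from `1`. -/
def blockLabel (N a c : ℕ) : ℕ := N * (a - 1) + c

variable {N a b c d : ℕ}

lemma blockLabel_lt_blockLabel (ha : 1 ≤ a) (hab : a < b) (hc : c ≤ N) (hd : 1 ≤ d) :
    blockLabel N a c < blockLabel N b d := by
  have hblock : N * (a - 1 + 1) ≤ N * (b - 1) := Nat.mul_le_mul_left N (by lia)
  rw [Nat.mul_succ] at hblock
  unfold blockLabel
  lia

lemma blockLabel_inj (ha : 1 ≤ a) (hb : 1 ≤ b) (hc : c ∈ Icc 1 N) (hd : d ∈ Icc 1 N) :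
    blockLabel N a c = blockLabel N b d ↔ a = b ∧ c = d := by
  refine ⟨fun h ↦ ?_, by rintro ⟨rfl, rfl⟩; rfl⟩
  rcases lt_trichotomy a b with hab | rfl | hba
  · exact absurd h (blockLabel_lt_blockLabel ha hab hc.2 hd.1).ne
  · exact ⟨rfl, Nat.add_left_cancel h⟩
  · exact absurd h (blockLabel_lt_blockLabel hb hba hd.2 hc.1).ne'

lemma injective_blockLabel_prod {X Y : Type*} {f : X → ℕ} {g : Y → ℕ} (hf : Function.Injective f)
    (hg : Function.Injective g) (hfpos : ∀ x, 1 ≤ f x) (hgmem : ∀ y, g y ∈ Icc 1 N) :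
    Function.Injective fun p : X × Y ↦ blockLabel N (f p.1) (g p.2) := by
  intro p q hpq
  obtain ⟨hfst, hsnd⟩ := (blockLabel_inj (hfpos _) (hfpos _) (hgmem _) (hgmem _)).1 hpq
  exact Prod.ext (hf hfst) (hg hsnd)

lemma blockLabel_mem_Icc {M : ℕ} (ha : a ∈ Icc 1 M) (hc : c ∈ Icc 1 N) :
    blockLabel N a c ∈ Icc 1 (M * N) := by
  refine ⟨hc.1.trans (Nat.le_add_left _ _), ?_⟩
  calc blockLabel N a c ≤ N * (a - 1) + N := Nat.add_le_add_left hc.2 _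
    _ = a * N := by rw [← Nat.mul_succ, Nat.succ_eq_add_one, Nat.sub_add_cancel ha.1, mul_comm]
    _ ≤ M * N := Nat.mul_le_mul_right N ha.2

lemma blockLabel_add_blockLabel_add_blockLabel {s t : ℕ} (ha : 1 ≤ a) (hb : 1 ≤ b) (hs : 1 ≤ s) :
    blockLabel N a c + blockLabel N b d + blockLabel N s t =
      blockLabel N (a + b + s - 2) (c + d + t) := by
  have hblocks : a + b + s - 2 - 1 = (a - 1) + (b - 1) + (s - 1) := by lia
  simp only [blockLabel, hblocks, mul_add]
  ring

end BlockLabel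

section EdgeMagic

variable {V E W F : Type} [Fintype V] [Fintype E] [Fintype W] [Fintype F]
  {ends : E → V × V} {fv : V → ℕ} {fe : E → ℕ} {v : ℕ}
  {ends' : F → W × W} {gv : W → ℕ} {ge : F → ℕ} {k : ℕ}

lemma range_eq_Icc_of_injective {X : Type*} [Fintype X] {f : X → ℕ} (hf : Function.Injective f)
    (hmem : ∀ x, f x ∈ Icc 1 (Fintype.card X)) : range f = Icc 1 (Fintype.card X) := by
  refine eq_of_subset_of_ncard_le (range_subset_iff.2 hmem) ?_
  rw [← image_univ, ncard_image_of_injective _ hf]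
  simp

namespace IsEdgeMagic

lemma of_injective (hinj : Function.Injective (Sum.elim fv fe))
    (hmem : ∀ x, Sum.elim fv fe x ∈ Icc 1 (Fintype.card V + Fintype.card E))
    (hsum : ∀ e, fv (ends e).1 + fe e + fv (ends e).2 = v) : IsEdgeMagic ends fv fe v := by
  rw [← Fintype.card_sum] at hmem
  exact ⟨hinj, by rw [range_eq_Icc_of_injective hinj hmem, Fintype.card_sum], hsum⟩

lemma mem_Icc (h : IsEdgeMagic ends fv fe v) (x : V ⊕ E) :
    Sum.elim fv fe x ∈ Icc 1 (Fintype.card V + Fintype.card E) :=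
  h.2.1 ▸ mem_range_self x

lemma three_le (h : IsEdgeMagic ends fv fe v) (e : E) : 3 ≤ v := by
  have htail : 1 ≤ fv (ends e).1 := (h.mem_Icc (.inl _)).1
  have hhead : 1 ≤ fv (ends e).2 := (h.mem_Icc (.inl _)).1
  have hedge : 1 ≤ fe e := (h.mem_Icc (.inr e)).1
  have hsum := h.2.2 e
  lia

lemma comp_equiv (h : IsEdgeMagic ends' gv ge k) (φ : V ≃ W) (ψ : E ≃ F)
    (hends : ∀ e, ends' (ψ e) = Prod.map φ φ (ends e)) :
    IsEdgeMagic ends (gv ∘ φ) (ge ∘ ψ) k := by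
  have hcomp : Sum.elim (gv ∘ φ) (ge ∘ ψ) = Sum.elim gv ge ∘ Equiv.sumCongr φ ψ :=
    Sum.elim_comp_map.symm
  refine ⟨hcomp ▸ h.1.comp (Equiv.injective _), ?_, fun e ↦ ?_⟩
  · rw [hcomp, EquivLike.range_comp, h.2.1, Fintype.card_congr φ, Fintype.card_congr ψ]
  · simpa [hends] using h.2.2 (ψ e)

end IsEdgeMagic

namespace IsSuperEdgeMagic

lemma vertex_mem_Icc (h : IsSuperEdgeMagic ends fv fe v) (a : V) :
    fv a ∈ Icc 1 (Fintype.card V) :=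
  h.2 ▸ mem_range_self a

lemma edge_mem_Icc (h : IsSuperEdgeMagic ends fv fe v) (e : E) :
    fe e ∈ Icc (Fintype.card V + 1) (Fintype.card V + Fintype.card E) := by
  obtain ⟨hpos, hle⟩ : fe e ∈ Icc 1 _ := h.1.mem_Icc (.inr e)
  refine ⟨?_, hle⟩
  by_contra! hlt
  obtain ⟨a, ha⟩ : fe e ∈ range fv := h.2 ▸ ⟨hpos, Nat.le_of_lt_succ hlt⟩
  exact Sum.inl_ne_inr (h.1.1 (a₁ := .inl a) (a₂ := .inr e) ha)

end IsSuperEdgeMagic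

end EdgeMagic

section Tensor

variable {V E W F : Type} {ends : E → V × V} {fv : V → ℕ} {fe : E → ℕ} {v : ℕ}
  {ends' : F → W × W} {gv : W → ℕ} {ge : F → ℕ} {k : ℕ}

/-- The tensor product of two digraphs, each edge being oriented from its first endpoint to its
second. -/
def tensorEnds (ends : E → V × V) (ends' : F → W × W) : E × F → (V × W) × (V × W) :=
  fun p ↦ (((ends p.1).1, (ends' p.2).1), ((ends p.1).2, (ends' p.2).2))

variable [Fintype V] [Fintype E] [Fintype W] [Fintype F]

theorem IsEdgeMagic.tensor (h : IsEdgeMagic ends fv fe v) (h' : IsSuperEdgeMagic ends' gv ge k)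
    (hcard : Fintype.card F = Fintype.card W) :
    IsEdgeMagic (tensorEnds ends ends')
      (fun p ↦ blockLabel (Fintype.card W) (fv p.1) (gv p.2))
      (fun p ↦ blockLabel (Fintype.card W) (fe p.1) (ge p.2 - Fintype.card W))
      (blockLabel (Fintype.card W) (v - 2) (k - Fintype.card W)) := by
  set N := Fintype.card W
  have hfv (a : V) : fv a ∈ Icc 1 (Fintype.card V + Fintype.card E) := h.mem_Icc (.inl a)
  have hfe (e : E) : fe e ∈ Icc 1 (Fintype.card V + Fintype.card E) := h.mem_Icc (.inr e)
  have hgv : ∀ x, gv x ∈ Icc 1 N := h'.vertex_mem_Icc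
  have hge (y : F) : ge y ∈ Icc (N + 1) (N + N) := by simpa only [hcard] using h'.edge_mem_Icc y
  have hge_sub (y : F) : ge y - N ∈ Icc 1 N :=
    ⟨Nat.le_sub_of_add_le' (hge y).1, Nat.sub_le_of_le_add (hge y).2⟩
  obtain ⟨hfv_inj, hfe_inj, hfv_ne_fe⟩ := Sum.elim_injective.1 h.1
  obtain ⟨hgv_inj, hge_inj, -⟩ := Sum.elim_injective.1 h'.1.1
  have hge_sub_inj : Function.Injective fun y ↦ ge y - N := fun y z hyz ↦
    hge_inj ((tsub_left_inj (Nat.le_of_succ_le (hge y).1) (Nat.le_of_succ_le (hge z).1)).1 hyz)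
  refine .of_injective (.sumElim ?_ ?_ ?_) ?_ ?_
  · exact injective_blockLabel_prod hfv_inj hgv_inj (fun a ↦ (hfv a).1) hgv
  · exact injective_blockLabel_prod hfe_inj hge_sub_inj (fun e ↦ (hfe e).1) hge_sub
  · rintro ⟨a, x⟩ ⟨e, y⟩ heq
    exact hfv_ne_fe a e ((blockLabel_inj (hfv a).1 (hfe e).1 (hgv x) (hge_sub y)).1 heq).1
  · rw [Fintype.card_prod, Fintype.card_prod, hcard, ← add_mul]
    rintro (⟨a, x⟩ | ⟨e, y⟩)
    · exact blockLabel_mem_Icc (hfv a) (hgv x)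
    · exact blockLabel_mem_Icc (hfe e) (hge_sub y)
  · rintro ⟨e, y⟩
    have hsub : gv (ends' y).1 + (ge y - N) + gv (ends' y).2 = k - N := by
      have := h'.1.2.2 y
      have := (hge y).1
      lia
    rw [blockLabel_add_blockLabel_add_blockLabel (hfv _).1 (hfe _).1 (hfv _).1]
    exact congrArg₂ (blockLabel N) (congrArg (· - 2) (h.2.2 e)) hsub

end Tensor

section StarLoop

variable {n : ℕ}

lemma starLoopEnds_eq_s10 (x : Option (Fin n)) : starLoopEnds n x = (none, x) := by
  cases x <;> rfl

lemma isSuperEdgeMagic_starLoopEnds (σ : Option (Fin n) ≃ Fin (n + 1)) :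
    IsSuperEdgeMagic (starLoopEnds n) (fun x ↦ σ x + 1) (fun x ↦ n + 1 + ((σ x).rev + 1))
      (2 * (n + 1) + 1 + (σ none + 1)) := by
  have hvertex : Function.Injective fun x ↦ (σ x : ℕ) + 1 := fun x y hxy ↦
    σ.injective (Fin.ext (Nat.succ.inj hxy))
  refine ⟨.of_injective (hvertex.sumElim ?_ ?_) ?_ ?_, range_eq_Icc_of_injective hvertex ?_⟩
  · intro x y hxy
    exact σ.injective (Fin.rev_injective (Fin.ext (by simpa using hxy)))
  · intro x y
    have := (σ x).isLt
    lia
  · rintro (x | x) <;>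
      simp only [Fintype.card_option, Fintype.card_fin, Fin.val_rev, Sum.elim_inl, Sum.elim_inr,
        mem_Icc] <;>
      lia
  · intro x
    simp only [starLoopEnds_eq_s10, Fin.val_rev]
    lia
  · intro x
    simp only [Fintype.card_option, Fintype.card_fin, mem_Icc]
    lia

lemma exists_isSuperEdgeMagic_starLoopEnds {r : ℕ} (hr : r ∈ Icc 1 (n + 1)) :
    ∃ gv ge, IsSuperEdgeMagic (starLoopEnds n) gv ge (2 * (n + 1) + 1 + r) := by
  obtain ⟨c, rfl⟩ : ∃ c : Fin (n + 1), r = c + 1 :=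
    ⟨⟨r - 1, Nat.sub_lt_right_of_lt_add hr.1 (Nat.lt_succ_of_le hr.2)⟩,
      (Nat.sub_add_cancel hr.1).symm⟩
  have h := isSuperEdgeMagic_starLoopEnds (finSuccEquiv' c).symm
  rw [finSuccEquiv'_symm_none] at h
  exact ⟨_, _, h⟩

end StarLoop

section Corona

variable {V E : Type}

/-- The corona `G ⊙ K̄_n`: `n` pendant vertices are attached to every vertex of `G`. -/
def coronaEnds (ends : E → V × V) (n : ℕ) :
    (E ⊕ V × Fin n) → (V ⊕ V × Fin n) × (V ⊕ V × Fin n)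
  | .inl e => Prod.map .inl .inl (ends e)
  | .inr p => (.inl p.1, .inr p)

/-- The functional graph of a permutation `σ`, that is, the disjoint union of the cycles of `σ`:
the edge `a` joins `a` to `σ a`. -/
def permEnds (σ : Equiv.Perm V) : V → V × V := fun a ↦ (a, σ a)

lemma cycleEnds_eq_permEnds (m : ℕ) : cycleEnds m = permEnds (finRotate m) := by
  funext i
  have := i.neZero
  refine Prod.ext rfl (Fin.ext ?_)
  simp [cycleEnds, permEnds, finRotate_apply, Fin.val_add]

lemma crownEnds_eq_coronaEnds (m n : ℕ) : crownEnds m n = coronaEnds (cycleEnds m) n := by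
  funext e
  cases e <;> rfl

/-- The correspondence `a ↦ (a, none)`, `(a, j) ↦ (a, some j)`, which matches the edges of the
corona of a functional graph with those of its tensor product with `K_{1,n}^l`. -/
def sumProdEquivProdOption (V : Type) (n : ℕ) : V ⊕ V × Fin n ≃ V × Option (Fin n) :=
  ((Equiv.refl V).sumCongr (Equiv.prodComm V (Fin n))).trans
    (optionProdEquiv.symm.trans (Equiv.prodComm _ V))

/-- The correspondence between the vertices of the corona of `permEnds σ` and those of the tensor
product with `K_{1,n}^l`. The pendant vertices at `a` go to the fiber over `σ a`, since the arcs of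
the tensor product that leave `(a, none)` end there. -/
def coronaVertexEquiv (σ : Equiv.Perm V) (n : ℕ) : V ⊕ V × Fin n ≃ V × Option (Fin n) :=
  ((Equiv.refl V).sumCongr (σ.prodCongr (Equiv.refl _))).trans (sumProdEquivProdOption V n)

lemma tensorEnds_permEnds_starLoopEnds (σ : Equiv.Perm V) (n : ℕ) (e : V ⊕ V × Fin n) :
    tensorEnds (permEnds σ) (starLoopEnds n) (sumProdEquivProdOption V n e) =
      Prod.map (coronaVertexEquiv σ n) (coronaVertexEquiv σ n) (coronaEnds (permEnds σ) n e) := by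
  rcases e with a | ⟨a, j⟩ <;> rfl

theorem exists_isEdgeMagic_coronaEnds [Fintype V] {σ : Equiv.Perm V} {n v r : ℕ}
    (h : ∃ fv fe, IsEdgeMagic (permEnds σ) fv fe v) (hr : r ∈ Icc 1 (n + 1)) :
    ∃ fv fe, IsEdgeMagic (coronaEnds (permEnds σ) n) fv fe ((n + 1) * (v - 2) + r + 1) := by
  obtain ⟨fv, fe, hf⟩ := h
  obtain ⟨gv, ge, hg⟩ := exists_isSuperEdgeMagic_starLoopEnds hr
  have hcorona := (hf.tensor hg rfl).comp_equiv (coronaVertexEquiv σ n) (sumProdEquivProdOption V n)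
    (tensorEnds_permEnds_starLoopEnds σ n)
  refine ⟨_, _, hcorona.1, hcorona.2.1, fun e ↦ (hcorona.2.2 e).trans ?_⟩
  have hv : 3 ≤ v := hf.three_le (sumProdEquivProdOption V n e).1
  have hblocks : v - 2 = v - 2 - 1 + 1 := by lia
  rw [blockLabel, Fintype.card_option, Fintype.card_fin, hblocks, mul_add]
  lia

theorem crown_valences_from_cycle_general [Fintype V] [Nonempty V] (σ : Equiv.Perm V) (n : ℕ) :
    (∀ v : ℕ, (∃ fv fe, IsEdgeMagic (permEnds σ) fv fe v) →
      ∀ r : ℕ, 1 ≤ r → r ≤ n + 1 →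
        ∃ fv fe, IsEdgeMagic (coronaEnds (permEnds σ) n) fv fe ((n + 1) * (v - 2) + r + 1)) ∧
    (∀ v v' : ℕ, (∃ fv fe, IsEdgeMagic (permEnds σ) fv fe v) →
      (∃ fv fe, IsEdgeMagic (permEnds σ) fv fe v') → v < v' →
      ∀ r r' : ℕ, 1 ≤ r → r ≤ n + 1 → 1 ≤ r' → r' ≤ n + 1 →
        (n + 1) * (v - 2) + r + 1 < (n + 1) * (v' - 2) + r' + 1) := by
  refine ⟨fun v h r hr hr' ↦ exists_isEdgeMagic_coronaEnds h ⟨hr, hr'⟩, ?_⟩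
  rintro v v' ⟨fv, fe, h⟩ - hlt r r' - hr hr' -
  have hv : 3 ≤ v := h.three_le (Classical.arbitrary V)
  have hblock := blockLabel_lt_blockLabel (N := n + 1) (a := v - 1) (b := v' - 1)
    (by lia) (by lia) hr hr'
  exact Nat.succ_lt_succ hblock

end Corona

/-- an edge-magic labeling of C_m with valence v yields, for
each 1 ≤ r ≤ n+1, an edge-magic labeling of the crown C_m ⊙ K̄_n with
valence (n+1)(v-2) + r + 1; and valences produced from a labeling of
smaller valence are strictly smaller than those from a larger one. -/
theorem crown_valences_from_cycle (m n : ℕ) (hm : 3 ≤ m) (hn : 1 ≤ n) :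
    (∀ v : ℕ, (∃ fv fe, IsEdgeMagic (cycleEnds m) fv fe v) →
      ∀ r : ℕ, 1 ≤ r → r ≤ n + 1 →
        ∃ fv fe, IsEdgeMagic (crownEnds m n) fv fe ((n + 1) * (v - 2) + r + 1)) ∧
    (∀ v v' : ℕ, (∃ fv fe, IsEdgeMagic (cycleEnds m) fv fe v) →
      (∃ fv fe, IsEdgeMagic (cycleEnds m) fv fe v') → v < v' →
      ∀ r r' : ℕ, 1 ≤ r → r ≤ n + 1 → 1 ≤ r' → r' ≤ n + 1 →
        (n + 1) * (v - 2) + r + 1 < (n + 1) * (v' - 2) + r' + 1) := by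
  have : NeZero m := ⟨by lia⟩
  simpa only [cycleEnds_eq_permEnds, crownEnds_eq_coronaEnds] using
    crown_valences_from_cycle_general (finRotate m) n
end

section
/- Let m = 2^α p_1^{α_1} p_2^{α_2} ⋯ p_k^{α_k} be the prime factorization of an even number m ≥ 4, where p_1,…,p_k are distinct odd primes and α ≥ 1. Then for every positive integer n the crown C_m ⊙ K̄_n admits edge-magic labelings realizing at least (α_1 + ⋯ + α_k)(n+1) mutually different valences; if moreover α ≥ 2, it admits edge-magic labelings realizing at least (1 + α_1 + ⋯ + α_k)(n+1) mutually different valences. -/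
/-!
If a graph is covered with `r` layers so that the layers of an edge and its two ends always add up
to `t`, then spreading each label `x` into the block `rx - r + 1, …, rx` turns an edge-magic
labeling of valence `k` into one of valence `rk - t`. The crown `C_m ⊙ K̄_n` is such a cover of
`C_m` with `n + 1` layers, and `t` takes the `n + 1` values `n, …, 2n` according to the layer of
the cycle vertices. In turn, if `m = 2M` and `M = (2s + 1)h` with `h ≥ 2`, then `C_m` covers
`C_{2h}` with `2s + 1` layers and `t = 3s`, so that a labeling of `C_{2h}` of valence `5h + 2`
lifts to one of `C_m` of valence `5M + 2 + s`. Hence each odd proper divisor of `M` contributes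
`n + 1` valences. If `q` is the odd part of `M`, these divisors include the proper divisors of
`q`, at least `Ω q` in number, and also `q` itself when `M` is even.
-/

/-- A cover of the graph `ends` by the graph `ends'` with `r` layers and constant `t`: a graph
homomorphism identifying the vertices (resp. edges) upstairs with pairs of a vertex (resp. edge)
downstairs and a layer, such that the layers along every edge upstairs add up to `t`. It plays the
role of the `⊗`-product by a family of labeled graphs; layers are numbered from `0`. -/
structure MagicCover {V E V' E' : Type} (ends : E → V × V) (ends' : E' → V' × V') (r t : ℕ) where
  projV : V' → V
  projE : E' → E
  layerV : V' → Fin r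
  layerE : E' → Fin r
  ends_projE (e : E') : ends (projE e) = Prod.map projV projV (ends' e)
  bijective_V : Function.Bijective fun v => (projV v, layerV v)
  bijective_E : Function.Bijective fun e => (projE e, layerE e)
  sum_layer (e : E') :
    (layerV (ends' e).1 : ℕ) + (layerE e : ℕ) + (layerV (ends' e).2 : ℕ) = t

namespace IsEdgeMagic

variable {V E : Type} [Fintype V] [Fintype E] {ends : E → V × V}
  {fv : V → ℕ} {fe : E → ℕ} {k : ℕ}

theorem of_injective_s11 (hv : Function.Injective fv) (he : Function.Injective fe)
    (hve : ∀ v e, fv v ≠ fe e)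
    (hv_mem : ∀ v, fv v ∈ Set.Icc 1 (Fintype.card V + Fintype.card E))
    (he_mem : ∀ e, fe e ∈ Set.Icc 1 (Fintype.card V + Fintype.card E))
    (hsum : ∀ e, fv (ends e).1 + fe e + fv (ends e).2 = k) :
    IsEdgeMagic ends fv fe k := by
  have hinj : Function.Injective (Sum.elim fv fe) := hv.sumElim he hve
  refine ⟨hinj, Set.eq_of_subset_of_ncard_le ?_ ?_ (Set.finite_Icc _ _), hsum⟩
  · exact Set.range_subset_iff.2 (Sum.rec hv_mem he_mem)
  · rw [← Set.image_univ, Set.ncard_image_of_injective _ hinj, Set.ncard_univ]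
    simp

theorem vertex_mem (h : IsEdgeMagic ends fv fe k) (v : V) :
    fv v ∈ Set.Icc 1 (Fintype.card V + Fintype.card E) :=
  h.2.1 ▸ Set.mem_range_self (Sum.inl v)

theorem edge_mem (h : IsEdgeMagic ends fv fe k) (e : E) :
    fe e ∈ Set.Icc 1 (Fintype.card V + Fintype.card E) :=
  h.2.1 ▸ Set.mem_range_self (Sum.inr e)

end IsEdgeMagic

theorem mul_sub_inj_of_lt {r x x' y y' : ℕ} (hx : 1 ≤ x) (hx' : 1 ≤ x') (hy : y < r) (hy' : y' < r)
    (h : r * x - y = r * x' - y') : x = x' ∧ y = y' := by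
  have hrx : r ≤ r * x := Nat.le_mul_of_pos_right r hx
  have hrx' : r ≤ r * x' := Nat.le_mul_of_pos_right r hx'
  have hadd : r * x + y' = r * x' + y := by omega
  have hyy' : y' = y := by
    simpa [Nat.mul_add_mod, Nat.mod_eq_of_lt hy, Nat.mod_eq_of_lt hy'] using congrArg (· % r) hadd
  subst hyy'
  exact ⟨Nat.eq_of_mul_eq_mul_left (by omega) (Nat.add_right_cancel hadd), rfl⟩

theorem mul_sub_mem_Icc {r x y N : ℕ} (hx : x ∈ Set.Icc 1 N) (hy : y < r) :
    r * x - y ∈ Set.Icc 1 (r * N) := by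
  have hrx : r ≤ r * x := Nat.le_mul_of_pos_right r hx.1
  have hxN : r * x ≤ r * N := Nat.mul_le_mul_left r hx.2
  exact ⟨by omega, by omega⟩

theorem IsEdgeMagic.lift {V E V' E' : Type} [Fintype V] [Fintype E] [Fintype V'] [Fintype E']
    {ends : E → V × V} {ends' : E' → V' × V'} {fv : V → ℕ} {fe : E → ℕ} {k r t : ℕ}
    (h : IsEdgeMagic ends fv fe k) (c : MagicCover ends ends' r t) :
    IsEdgeMagic ends' (fun v => r * fv (c.projV v) - c.layerV v)
      (fun e => r * fe (c.projE e) - c.layerE e) (r * k - t) := by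
  have hcard : Fintype.card V' + Fintype.card E' = r * (Fintype.card V + Fintype.card E) := by
    rw [Fintype.card_of_bijective c.bijective_V, Fintype.card_of_bijective c.bijective_E]
    simp only [Fintype.card_prod, Fintype.card_fin]
    ring
  have hlabel {x x' : V ⊕ E} {y y' : Fin r}
      (heq : r * Sum.elim fv fe x - y = r * Sum.elim fv fe x' - y') : x = x' ∧ y = y' := by
    have hpos (z) : 1 ≤ Sum.elim fv fe z := (h.2.1 ▸ Set.mem_range_self z : _ ∈ Set.Icc 1 _).1
    obtain ⟨hx, hy⟩ := mul_sub_inj_of_lt (hpos x) (hpos x') y.isLt y'.isLt heq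
    exact ⟨h.1 hx, Fin.ext hy⟩
  apply IsEdgeMagic.of_injective_s11
  · intro v v' heq
    obtain ⟨hproj, hlayer⟩ := hlabel (x := .inl _) (x' := .inl _) heq
    exact c.bijective_V.1 (Prod.ext (Sum.inl_injective hproj) hlayer)
  · intro e e' heq
    obtain ⟨hproj, hlayer⟩ := hlabel (x := .inr _) (x' := .inr _) heq
    exact c.bijective_E.1 (Prod.ext (Sum.inr_injective hproj) hlayer)
  · intro v e heq
    exact Sum.inl_ne_inr (hlabel (x := .inl _) (x' := .inr _) heq).1
  · rw [hcard]
    exact fun v => mul_sub_mem_Icc (h.vertex_mem _) (c.layerV v).isLt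
  · rw [hcard]
    exact fun e => mul_sub_mem_Icc (h.edge_mem _) (c.layerE e).isLt
  · intro e
    have hsum := h.2.2 (c.projE e)
    rw [c.ends_projE, Prod.map_fst, Prod.map_snd] at hsum
    have hu := (mul_sub_mem_Icc (h.vertex_mem (c.projV (ends' e).1)) (c.layerV (ends' e).1).isLt).1
    have he := (mul_sub_mem_Icc (h.edge_mem (c.projE e)) (c.layerE e).isLt).1
    have hv := (mul_sub_mem_Icc (h.vertex_mem (c.projV (ends' e).2)) (c.layerV (ends' e).2).isLt).1
    have hlayer := c.sum_layer e
    rw [← hsum, mul_add, mul_add]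
    omega

theorem cycleEnds_snd_injective (m : ℕ) : Function.Injective fun i => (cycleEnds m i).2 := by
  intro i j hij
  have hmod : i + 1 ≡ j + 1 [MOD m] := congrArg Fin.val hij
  exact Fin.ext ((Nat.ModEq.add_right_cancel' 1 hmod).eq_of_lt_of_lt i.isLt j.isLt)

section CrownCover

variable (m : ℕ) {n : ℕ} (c : Fin (n + 1))

/-- The layer of a vertex of the crown in its cover of the cycle, also used, reversed, for edges:
cycle vertices lie in layer `c` and pendant vertices in the other layers. -/
def crownLayer : Fin m ⊕ Fin m × Fin n → Fin (n + 1) :=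
  Sum.elim (fun _ => c) fun p => c.succAbove p.2

theorem bijective_crownLayer {σ : Fin m → Fin m} (hσ : Function.Injective σ) :
    Function.Bijective fun x => (Sum.elim id (fun p => σ p.1) x, crownLayer m c x) := by
  refine (Fintype.bijective_iff_injective_and_card _).2 ⟨?_, ?_⟩
  · rintro (i | ⟨i, j⟩) (i' | ⟨i', j'⟩) h <;>
      simp only [crownLayer, Sum.elim_inl, Sum.elim_inr, Prod.mk.injEq, id, hσ.eq_iff,
        Fin.succAbove_right_inj, Fin.succAbove_ne, Fin.ne_succAbove, and_true, and_false] at h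
    · rw [h]
    · rw [h.1, h.2]
  · simp only [Fintype.card_sum, Fintype.card_prod, Fintype.card_fin]
    ring

/-- The crown as a cover of its cycle: the pendant edges at `v_i` lie over the cycle edge from `v_i`
to `v_{i+1}`, and so the pendant vertices at `v_i` lie over `v_{i+1}`. -/
def crownCover : MagicCover (cycleEnds m) (crownEnds m n) (n + 1) (n + c) where
  projV := Sum.elim id fun p => (cycleEnds m p.1).2
  projE := Sum.elim id Prod.fst
  layerV := crownLayer m c
  layerE x := (crownLayer m c x).rev
  ends_projE := by rintro (i | p) <;> rfl
  bijective_V := bijective_crownLayer m c (cycleEnds_snd_injective m)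
  bijective_E :=
    (Function.bijective_id.prodMap Fin.rev_bijective).comp
      (bijective_crownLayer m c Function.injective_id)
  sum_layer := by
    rintro (i | p) <;>
      simp only [crownEnds, crownLayer, Sum.elim_inl, Sum.elim_inr, Fin.val_rev] <;> omega

end CrownCover

section CycleCover

variable {s : ℕ}

/-- Translation by `1/2 = s + 1` in `ℤ/(2s+1)`. -/
def addHalf (q : Fin (2 * s + 1)) : Fin (2 * s + 1) :=
  ⟨if q.val < s then q + s + 1 else q - s, by split_ifs <;> omega⟩

theorem addHalf_injective : Function.Injective (addHalf (s := s)) := by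
  intro q q' h
  simp only [addHalf, Fin.mk.injEq] at h
  split_ifs at h <;> omega

theorem val_addHalf_addHalf (q : Fin (2 * s + 1)) :
    (addHalf (addHalf q)).val = (q.val + 1) % (2 * s + 1) := by
  have hmod : (q.val + 1) % (2 * s + 1) = if q.val = 2 * s then 0 else q.val + 1 := by
    split_ifs with hq
    · rw [hq, Nat.mod_self]
    · exact Nat.mod_eq_of_lt (by omega)
  rw [hmod]
  simp only [addHalf]
  split_ifs <;> omega

/-- The layer of an edge joining the layers `q` and `q + 1/2`. It is well defined because the sums
`q + (q + 1/2)` of representatives run through `s, …, 3s`. -/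
def halfEdge (q : Fin (2 * s + 1)) : Fin (2 * s + 1) :=
  ⟨3 * s - (q + addHalf q), by simp only [addHalf]; split_ifs <;> omega⟩

theorem add_halfEdge_add_addHalf (q : Fin (2 * s + 1)) :
    (q : ℕ) + (halfEdge q : ℕ) + (addHalf q : ℕ) = 3 * s := by
  simp only [halfEdge, addHalf]
  split_ifs <;> omega

theorem halfEdge_injective : Function.Injective (halfEdge (s := s)) := by
  intro q q' h
  simp only [halfEdge, addHalf, Fin.mk.injEq] at h
  split_ifs at h <;> omega

theorem bijective_modNat_layer {r a : ℕ} {g : Fin a → Fin r → Fin r}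
    (hg : ∀ b, Function.Injective (g b)) :
    Function.Bijective fun i : Fin (r * a) => (i.modNat, g i.modNat i.divNat) := by
  refine (Fintype.bijective_iff_injective_and_card _).2 ⟨fun i j hij => ?_, by simp [mul_comm]⟩
  obtain ⟨hmod, hdiv⟩ := Prod.mk.inj hij
  rw [hmod] at hdiv
  exact finProdFinEquiv.symm.injective (Prod.ext (hg _ hdiv) hmod)

theorem modNat_cycleEnds_snd {r a : ℕ} (i : Fin (r * a)) :
    (cycleEnds (r * a) i).2.modNat = (cycleEnds a i.modNat).2 := by
  apply Fin.ext
  simp [cycleEnds, Fin.modNat]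

theorem val_divNat_cycleEnds_snd {r a : ℕ} (i : Fin (r * a)) :
    ((cycleEnds (r * a) i).2.divNat : ℕ) =
      if (i.modNat : ℕ) + 1 = a then (i.divNat + 1) % r else i.divNat := by
  have ha : 0 < a := i.modNat.pos
  have hdvd : a ∣ (i : ℕ) + 1 ↔ (i.modNat : ℕ) + 1 = a := by
    rw [Fin.coe_modNat, Nat.dvd_iff_mod_eq_zero, ← Nat.mod_add_mod]
    refine ⟨fun h => ?_, fun h => by rw [h, Nat.mod_self]⟩
    exact Nat.le_antisymm (Nat.mod_lt _ ha)
      (Nat.le_of_dvd (Nat.succ_pos _) (Nat.dvd_of_mod_eq_zero h))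
  have hdiv : ((i : ℕ) + 1) / a % r = (i.divNat + if a ∣ (i : ℕ) + 1 then 1 else 0) % r := by
    rw [Nat.succ_div, Fin.coe_divNat]
  rw [← Nat.mod_mul_left_div_self] at hdiv
  refine hdiv.trans ?_
  simp only [hdvd]
  split_ifs
  · rfl
  · exact Nat.mod_eq_of_lt i.divNat.isLt

variable (s) in
/-- The cycle of length `(2s+1)a` as a cover of the cycle of even length `a`. Its vertices alternate
between the layers `q` and `q + 1/2` of `ℤ/(2s+1)`; the last edge of a turn steps from `q + 1/2` to
`q + 1`, so that the cover is a single cycle. -/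
def cycleCover {a : ℕ} (ha : Even a) :
    MagicCover (cycleEnds a) (cycleEnds ((2 * s + 1) * a)) (2 * s + 1) (3 * s) where
  projV := Fin.modNat
  projE := Fin.modNat
  layerV i := if Even i.modNat.val then i.divNat else addHalf i.divNat
  layerE i := halfEdge (if i.modNat + 1 = a then addHalf i.divNat else i.divNat)
  ends_projE i := Prod.ext rfl (modNat_cycleEnds_snd i).symm
  bijective_V := bijective_modNat_layer (g := fun b q => if Even b.val then q else addHalf q)
    fun b => by
      split_ifs
      · exact Function.injective_id
      · exact addHalf_injective
  bijective_E := bijective_modNat_layer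
    (g := fun b q => halfEdge (if b + 1 = a then addHalf q else q)) fun b => by
      split_ifs
      · exact halfEdge_injective.comp addHalf_injective
      · exact halfEdge_injective
  sum_layer i := by
    have hdiv := val_divNat_cycleEnds_snd i
    have hmod : ((cycleEnds _ i).2.modNat : ℕ) = (i.modNat + 1) % a :=
      congrArg Fin.val (modNat_cycleEnds_snd i)
    have hfst : (cycleEnds ((2 * s + 1) * a) i).1 = i := rfl
    rw [hfst]
    by_cases hlast : i.modNat.val + 1 = a
    · rw [if_pos hlast, ← val_addHalf_addHalf] at hdiv
      have hodd : ¬Even i.modNat.val := by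
        rw [← hlast, Nat.even_add_one] at ha
        exact ha
      rw [hlast, Nat.mod_self] at hmod
      rw [if_neg hodd, if_pos hlast, hmod, if_pos Even.zero, hdiv]
      exact add_halfEdge_add_addHalf _
    · have hdivNat : (cycleEnds _ i).2.divNat = i.divNat := Fin.ext (by rw [hdiv, if_neg hlast])
      rw [Nat.mod_eq_of_lt (by omega)] at hmod
      rw [if_neg hlast, hdivNat, hmod]
      by_cases heven : Even i.modNat.val
      · rw [if_pos heven, if_neg (Nat.not_even_iff_odd.2 heven.add_one)]
        exact add_halfEdge_add_addHalf _
      · rw [if_neg heven, if_pos (Nat.even_add_one.2 heven), ← add_halfEdge_add_addHalf i.divNat]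
        omega

end CycleCover

theorem isEdgeMagic_cycle_of_path {m k : ℕ} {f e : ℕ → ℕ}
    (hf : Set.MapsTo f (Set.Iio m) (Set.Icc 1 (2 * m)))
    (he : Set.MapsTo e (Set.Iio m) (Set.Icc 1 (2 * m)))
    (hf_inj : Set.InjOn f (Set.Iio m)) (he_inj : Set.InjOn e (Set.Iio m))
    (hfe : ∀ i < m, ∀ j < m, f i ≠ e j)
    (hpath : ∀ i, i + 1 < m → f i + e i + f (i + 1) = k)
    (hclose : ∀ i, i + 1 = m → f i + e i + f 0 = k) :
    IsEdgeMagic (cycleEnds m) (fun i => f i) (fun i => e i) k := by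
  apply IsEdgeMagic.of_injective_s11
  · exact fun i j h => Fin.ext (hf_inj i.isLt j.isLt h)
  · exact fun i j h => Fin.ext (he_inj i.isLt j.isLt h)
  · exact fun i j => hfe i i.isLt j j.isLt
  · simpa [← two_mul] using fun i : Fin m => hf i.isLt
  · simpa [← two_mul] using fun i : Fin m => he i.isLt
  · intro i
    rcases Nat.lt_or_eq_of_le (show (i : ℕ) + 1 ≤ m from i.isLt) with hi | hi
    · simpa [cycleEnds, Nat.mod_eq_of_lt hi] using hpath i hi
    · have hsucc : ((i : ℕ) + 1) % m = 0 := by rw [hi, Nat.mod_self]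
      simpa only [cycleEnds, hsucc] using hclose i hi

/-- Vertex labels of an edge-magic labeling of `C_{2h}`, `h = 2j + 1`: they zigzag between the low
labels `1, …, h` and the high labels `h + 2, …, 2h`, the low labels `j + 1` and `j + 2` being
adjacent, and the last vertex is labeled `2h + 1`. -/
def oddHalfV (j i : ℕ) : ℕ :=
  if i = 4 * j + 1 then 4 * j + 3
  else if i ≤ 2 * j then if i % 2 = 0 then i / 2 + 1 else 2 * j + 3 + i / 2
  else if i % 2 = 0 then 2 * j + 2 + i / 2 else i / 2 + 2

/-- Edge labels of the labeling `oddHalfV`, forced by its valence `5h + 2`. -/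
def oddHalfE (j i : ℕ) : ℕ :=
  if i = 4 * j + 1 then 6 * j + 3
  else if i = 4 * j then 2 * j + 2
  else if i = 2 * j then 8 * j + 4
  else 8 * j + 3 - i

theorem isEdgeMagic_cycle_oddHalf {j : ℕ} (hj : 1 ≤ j) :
    IsEdgeMagic (cycleEnds (2 * (2 * j + 1))) (fun i => oddHalfV j i) (fun i => oddHalfE j i)
      (5 * (2 * j + 1) + 2) := by
  apply isEdgeMagic_cycle_of_path
  · intro i (hi : i < _)
    rw [Set.mem_Icc, oddHalfV]
    split_ifs <;> omega
  · intro i (hi : i < _)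
    rw [Set.mem_Icc, oddHalfE]
    split_ifs <;> omega
  · intro i (hi : i < _) i' (hi' : i' < _) h
    rw [oddHalfV, oddHalfV] at h
    split_ifs at h <;> omega
  · intro i (hi : i < _) i' (hi' : i' < _) h
    rw [oddHalfE, oddHalfE] at h
    split_ifs at h <;> omega
  · intro i hi i' hi' h
    rw [oddHalfV, oddHalfE] at h
    split_ifs at h <;> omega
  · intro i hi
    rw [oddHalfV, oddHalfE, oddHalfV]
    split_ifs <;> omega
  · intro i hi
    have hzero : oddHalfV j 0 = 1 := by simp [oddHalfV]
    rw [hzero, oddHalfV, oddHalfE]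
    split_ifs <;> omega

/-- Vertex labels of an edge-magic labeling of `C_{2h}`, `h = 2j`: between the first vertex, labeled
`3h`, and the last, labeled `1`, they zigzag between the low labels `2, …, h + 1` and the high
labels `h + 2, …, 2h - 1`, the low labels `j + 1` and `j + 2` being adjacent. -/
def evenHalfV (j i : ℕ) : ℕ :=
  if i = 0 then 6 * j
  else if i = 4 * j - 1 then 1
  else if i < 2 * j then if i % 2 = 0 then 2 * j + 1 + i / 2 else i / 2 + 2
  else if i % 2 = 0 then i / 2 + 2 else i / 2 + 2 * j + 1

/-- Edge labels of the labeling `evenHalfV`, forced by its valence `5h + 2`. -/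
def evenHalfE (j i : ℕ) : ℕ :=
  if i = 0 then 4 * j
  else if i = 4 * j - 1 then 4 * j + 1
  else if i = 4 * j - 2 then 8 * j
  else if i = 2 * j - 1 then 8 * j - 1
  else 8 * j - 1 - i

theorem isEdgeMagic_cycle_evenHalf {j : ℕ} (hj : 1 ≤ j) :
    IsEdgeMagic (cycleEnds (2 * (2 * j))) (fun i => evenHalfV j i) (fun i => evenHalfE j i)
      (5 * (2 * j) + 2) := by
  apply isEdgeMagic_cycle_of_path
  · intro i (hi : i < _)
    rw [Set.mem_Icc, evenHalfV]
    split_ifs <;> omega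
  · intro i (hi : i < _)
    rw [Set.mem_Icc, evenHalfE]
    split_ifs <;> omega
  · intro i (hi : i < _) i' (hi' : i' < _) h
    rw [evenHalfV, evenHalfV] at h
    split_ifs at h <;> omega
  · intro i (hi : i < _) i' (hi' : i' < _) h
    rw [evenHalfE, evenHalfE] at h
    split_ifs at h <;> omega
  · intro i hi i' hi' h
    rw [evenHalfV, evenHalfE] at h
    split_ifs at h <;> omega
  · intro i hi
    generalize hsucc : i + 1 = i' at hi ⊢
    rw [evenHalfV, evenHalfE, evenHalfV]
    split_ifs <;> omega
  · intro i hi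
    have hzero : evenHalfV j 0 = 6 * j := if_pos rfl
    rw [hzero, evenHalfV, evenHalfE]
    split_ifs <;> omega

theorem exists_isEdgeMagic_cycle {h : ℕ} (hh : 2 ≤ h) :
    ∃ fv fe, IsEdgeMagic (cycleEnds (2 * h)) fv fe (5 * h + 2) := by
  obtain ⟨j, rfl | rfl⟩ := Nat.even_or_odd' h
  · exact ⟨_, _, isEdgeMagic_cycle_evenHalf (by omega)⟩
  · exact ⟨_, _, isEdgeMagic_cycle_oddHalf (by omega)⟩

theorem exists_isEdgeMagic_cycle_of_odd_divisor {M r : ℕ} (hr : r ∈ M.properDivisors)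
    (hodd : Odd r) : ∃ fv fe, IsEdgeMagic (cycleEnds (2 * M)) fv fe (5 * M + 2 + r / 2) := by
  have hM : M ≠ 0 := Nat.ne_zero_of_lt (Nat.mem_properDivisors.1 hr).2
  obtain ⟨h, hh, rfl⟩ := (Nat.mem_properDivisors_iff_exists hM).1 hr
  obtain ⟨s, rfl⟩ := hodd
  obtain ⟨fv, fe, hf⟩ := exists_isEdgeMagic_cycle hh
  have hs : (2 * s + 1) / 2 = s := by omega
  have hk : (2 * s + 1) * (5 * h + 2) - 3 * s = 5 * ((2 * s + 1) * h) + 2 + s :=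
    Nat.sub_eq_of_eq_add (by ring)
  rw [Nat.mul_left_comm 2, hs, ← hk]
  exact ⟨_, _, hf.lift (cycleCover s (even_two_mul h))⟩

/-- The valence of the labeling of the crown on `C_{2M}` built from an odd proper divisor `r` of `M`
with the cycle vertices in layer `c`. -/
def crownValence (M n r c : ℕ) : ℕ := (n + 1) * (5 * M + 2 + r / 2) - (n + c)

theorem exists_isEdgeMagic_crown {M n r c : ℕ} (hr : r ∈ M.properDivisors) (hodd : Odd r)
    (hc : c < n + 1) :
    ∃ fv fe, IsEdgeMagic (crownEnds (2 * M) n) fv fe (crownValence M n r c) := by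
  obtain ⟨fv, fe, hf⟩ := exists_isEdgeMagic_cycle_of_odd_divisor hr hodd
  exact ⟨_, _, hf.lift (crownCover (2 * M) ⟨c, hc⟩)⟩

theorem crownValence_injOn (M n : ℕ) :
    Set.InjOn (fun p : ℕ × ℕ => crownValence M n p.1 p.2)
      ({r | Odd r} ×ˢ Set.Iio (n + 1)) := by
  rintro ⟨r, c⟩ ⟨hr, hc : c < n + 1⟩ ⟨r', c'⟩ ⟨hr', hc' : c' < n + 1⟩ heq
  have hle (x : ℕ) : 2 * (n + 1) ≤ (n + 1) * (5 * M + 2 + x) := by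
    rw [mul_comm]
    exact Nat.mul_le_mul_left _ (by omega)
  have hlabel : (n + 1) * (5 * M + 2 + r / 2) - c = (n + 1) * (5 * M + 2 + r' / 2) - c' := by
    have := hle (r / 2)
    have := hle (r' / 2)
    simp only [crownValence] at heq
    omega
  obtain ⟨hhalf, rfl⟩ := mul_sub_inj_of_lt (by omega) (by omega) hc hc' hlabel
  have hmod : r % 2 = 1 := Nat.odd_iff.1 hr
  have hmod' : r' % 2 = 1 := Nat.odd_iff.1 hr'
  rw [Prod.mk.injEq]
  omega

theorem exists_card_crown_valences (M n : ℕ) :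
    ∃ S : Finset ℕ, S.card = ({r ∈ M.properDivisors | Odd r}).card * (n + 1) ∧
      ∀ k ∈ S, ∃ fv fe, IsEdgeMagic (crownEnds (2 * M) n) fv fe k := by
  refine ⟨({r ∈ M.properDivisors | Odd r} ×ˢ Finset.range (n + 1)).image
    fun p => crownValence M n p.1 p.2, ?_, ?_⟩
  · rw [Finset.card_image_of_injOn, Finset.card_product, Finset.card_range]
    refine (crownValence_injOn M n).mono fun p hp => ?_
    simp only [Finset.coe_product, Set.mem_prod, Finset.mem_coe, Finset.mem_filter,
      Finset.mem_range] at hp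
    exact ⟨hp.1.2, hp.2⟩
  · intro k hk
    obtain ⟨⟨r, c⟩, hrc, rfl⟩ := Finset.mem_image.1 hk
    simp only [Finset.mem_product, Finset.mem_filter, Finset.mem_range] at hrc
    exact exists_isEdgeMagic_crown hrc.1.1 hrc.1.2 hrc.2

open scoped ArithmeticFunction.Omega

theorem cardFactors_lt_card_divisors {n : ℕ} (hn : n ≠ 0) : Ω n < n.divisors.card := by
  induction n using induction_on_primes with
  | zero => contradiction
  | one => simp
  | prime_mul p n hp ih =>
    have hn' : n ≠ 0 := right_ne_zero_of_mul hn
    have hlt : n < p * n := lt_mul_of_one_lt_left (Nat.pos_of_ne_zero hn') hp.one_lt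
    have hss : n.divisors ⊂ (p * n).divisors :=
      Finset.ssubset_iff_subset_ne.2 ⟨Nat.divisors_subset_of_dvd hn (Dvd.intro_left p rfl),
        fun h => hlt.ne (Nat.divisors_inj.1 h)⟩
    rw [ArithmeticFunction.cardFactors_mul hp.ne_zero hn',
      ArithmeticFunction.cardFactors_apply_prime hp, add_comm]
    exact (Nat.succ_lt_succ (ih hn')).trans_le (Finset.card_lt_card hss)

theorem factorization_two_pow_mul_odd {q : ℕ} (hq : Odd q) (α : ℕ) :
    (2 ^ α * q).factorization 2 = α := by
  rw [Nat.factorization_mul (by positivity) hq.pos.ne', Finsupp.add_apply,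
    Nat.prime_two.factorization_pow, Finsupp.single_eq_same,
    Nat.factorization_eq_zero_of_not_dvd hq.not_two_dvd_nat, add_zero]

theorem factorization_sum_two_pow_mul {q : ℕ} (hq : q ≠ 0) (α : ℕ) :
    ((2 ^ α * q).factorization.sum fun _ e => e) = α + Ω q := by
  rw [← ArithmeticFunction.cardFactors_eq_sum_factorization,
    ArithmeticFunction.cardFactors_mul (by positivity) hq,
    ArithmeticFunction.cardFactors_apply_prime_pow Nat.prime_two]

theorem cardFactors_le_card_odd_properDivisors {M q : ℕ} (hM : M ≠ 0) (hq : Odd q) (hqM : q ∣ M) :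
    Ω q ≤ ({r ∈ M.properDivisors | Odd r}).card := by
  have hsub : q.properDivisors ⊆ {r ∈ M.properDivisors | Odd r} := fun r hr => by
    obtain ⟨hrq, hlt⟩ := Nat.mem_properDivisors.1 hr
    rw [Finset.mem_filter, Nat.mem_properDivisors]
    exact ⟨⟨hrq.trans hqM, hlt.trans_le (Nat.le_of_dvd (Nat.pos_of_ne_zero hM) hqM)⟩,
      hq.of_dvd_nat hrq⟩
  have hlt := cardFactors_lt_card_divisors hq.pos.ne'
  rw [← Nat.cons_self_properDivisors hq.pos.ne', Finset.card_cons] at hlt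
  exact (Nat.le_of_lt_succ hlt).trans (Finset.card_le_card hsub)

theorem cardFactors_lt_card_odd_properDivisors {M q : ℕ} (hq : Odd q)
    (hqM : q ∈ M.properDivisors) : Ω q < ({r ∈ M.properDivisors | Odd r}).card := by
  have hsub : q.divisors ⊆ {r ∈ M.properDivisors | Odd r} := fun r hr => by
    have hrq := Nat.dvd_of_mem_divisors hr
    obtain ⟨hdvd, hlt⟩ := Nat.mem_properDivisors.1 hqM
    rw [Finset.mem_filter, Nat.mem_properDivisors]
    exact ⟨⟨hrq.trans hdvd, (Nat.le_of_dvd hq.pos hrq).trans_lt hlt⟩, hq.of_dvd_nat hrq⟩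
  exact (cardFactors_lt_card_divisors hq.pos.ne').trans_le (Finset.card_le_card hsub)

/-- for even m ≥ 4 with m = 2^α·p₁^{α₁}⋯p_k^{α_k}
(α = m.factorization 2, α₁+⋯+α_k = Ω(m) - α), the crown C_m ⊙ K̄_n admits
at least (α₁+⋯+α_k)(n+1) mutually different edge-magic valences, and at
least (1+α₁+⋯+α_k)(n+1) of them when α ≥ 2. -/
theorem crown_even_valences_lowerBound (m n : ℕ) (hm : 4 ≤ m) (heven : 2 ∣ m)
    (hn : 1 ≤ n) :
    (∃ S : Finset ℕ,
      ((m.factorization.sum fun _ e => e) - m.factorization 2) * (n + 1) ≤ S.card ∧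
      ∀ k ∈ S, ∃ fv fe, IsEdgeMagic (crownEnds m n) fv fe k) ∧
    (2 ≤ m.factorization 2 →
      ∃ S : Finset ℕ,
        ((m.factorization.sum fun _ e => e) - m.factorization 2 + 1) * (n + 1) ≤ S.card ∧
        ∀ k ∈ S, ∃ fv fe, IsEdgeMagic (crownEnds m n) fv fe k) := by
  obtain ⟨M, rfl⟩ := heven
  have hM : M ≠ 0 := by omega
  obtain ⟨β, q, hq, rfl⟩ := Nat.exists_eq_two_pow_mul_odd hM
  obtain ⟨S, hcard, hS⟩ := exists_card_crown_valences (2 ^ β * q) n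
  have hpow : 2 * (2 ^ β * q) = 2 ^ (β + 1) * q := by ring
  have htwo : (2 * (2 ^ β * q)).factorization 2 = β + 1 := by
    rw [hpow, factorization_two_pow_mul_odd hq]
  have hsum : ((2 * (2 ^ β * q)).factorization.sum fun _ e => e) = β + 1 + Ω q := by
    rw [hpow, factorization_sum_two_pow_mul hq.pos.ne']
  rw [htwo, hsum, Nat.add_sub_cancel_left]
  refine ⟨⟨S, ?_, hS⟩, fun hβ => ⟨S, ?_, hS⟩⟩ <;> rw [hcard] <;> gcongr
  · exact cardFactors_le_card_odd_properDivisors hM hq (Dvd.intro_left _ rfl)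
  · have hlt : q < 2 ^ β * q :=
      lt_mul_of_one_lt_left hq.pos (Nat.one_lt_two_pow (by omega))
    exact cardFactors_lt_card_odd_properDivisors hq
      (Nat.mem_properDivisors.2 ⟨Dvd.intro_left _ rfl, hlt⟩)
end
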